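/- arXiv:2006.00994 — 2 statements merged into one kernel-verified Lean document; each statement's English description precedes it below -/
import Mathlib

section
/- There exist infinitely many positive integers n for which there is an n-vertex planar graph G containing no Theta graph on 6 vertices as a subgraph with exactly (18/7)n - 48/7 edges. -/
open SimpleGraph

/-- `H` is a minor of `G`: there is an assignment of disjoint connected branch sets
of `G` to the vertices of `H` realizing all edges of `H`. -/
def HasMinor {V : Type*} {W : Type*} (G : SimpleGraph V) (H : SimpleGraph W) : Prop :=
  ∃ f : V → Option W,
    (∀ w : W, ∃ v, f v = some w) ∧
    (∀ w : W, (G.induce {v | f v = some w}).Preconnected) ∧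
    (∀ w₁ w₂ : W, H.Adj w₁ w₂ →
      ∃ v₁ v₂, f v₁ = some w₁ ∧ f v₂ = some w₂ ∧ G.Adj v₁ v₂)

/-- Planarity, via Wagner's theorem: no `K₅` minor and no `K₃,₃` minor. -/
def IsPlanar {V : Type*} (G : SimpleGraph V) : Prop :=
  ¬ HasMinor G (completeGraph (Fin 5)) ∧
    ¬ HasMinor G (completeBipartiteGraph (Fin 3) (Fin 3))

/-- `G` contains a Theta graph on 6 vertices: a 6-cycle together with a chord
joining two non-consecutive vertices of the cycle. -/
def HasTheta6 {V : Type*} (G : SimpleGraph V) : Prop :=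
  ∃ v : Fin 6 → V, Function.Injective v ∧
    (∀ i : Fin 6, G.Adj (v i) (v (i + 1))) ∧
    ∃ i j : Fin 6, i ≠ j ∧ j ≠ i + 1 ∧ i ≠ j + 1 ∧ G.Adj (v i) (v j)

/-! ### A cycle space criterion for excluding minors -/

lemma class_count {Cl EH : Type*} [Fintype Cl] [Fintype EH] [DecidableEq Cl] (l r : EH → Cl)
    (m k : ℕ) (hm : 0 < m) (cyc : Fin m → EH → ZMod 2) (hli : LinearIndependent (ZMod 2) cyc)
    (ψ : Fin m → Cl → ZMod 2) (hψ : ∀ j i, cyc j i = ψ j (l i) + ψ j (r i))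
    (hk : ∀ ψ : Cl → ZMod 2, (fun i => ψ (l i) + ψ (r i)) ≠ 0 →
      k ≤ (Finset.univ.filter (fun i => ψ (l i) + ψ (r i) ≠ 0)).card) :
    k * (m + 1) ≤ 2 * Fintype.card EH := by
  classical
  let b : Cl → EH → ZMod 2 := fun κ i =>
    (Pi.single κ 1 : Cl → ZMod 2) (l i) + (Pi.single κ 1 : Cl → ZMod 2) (r i)
  let C : Finset Cl := Finset.univ.filter (fun κ => b κ ≠ 0)
  -- double counting
  have h1 : k * C.card ≤ 2 * Fintype.card EH := by
    have hA : ∑ κ ∈ C, (Finset.univ.filter (fun i => b κ i ≠ 0)).card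
        ≤ 2 * Fintype.card EH := by
      simp_rw [Finset.card_filter]
      rw [Finset.sum_comm]
      have : ∀ i ∈ (Finset.univ : Finset EH), ∑ κ ∈ C, (if b κ i ≠ 0 then 1 else 0) ≤ 2 := by
        intro i _
        rw [← Finset.card_filter]
        refine (Finset.card_le_card (t := {l i, r i}) ?_).trans Finset.card_le_two
        intro κ hκ
        simp only [Finset.mem_filter] at hκ
        have h := hκ.2
        simp only [Finset.mem_insert, Finset.mem_singleton]
        by_contra hcon
        push Not at hcon
        apply h
        simp [b, Pi.single_apply, hcon.1.symm, hcon.2.symm]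
      refine (Finset.sum_le_sum this).trans ?_
      simp [mul_comm]
    refine le_trans ?_ hA
    rw [mul_comm, ← smul_eq_mul, ← Finset.sum_const]
    apply Finset.sum_le_sum
    intro κ hκ
    have hb : b κ ≠ 0 := (Finset.mem_filter.1 hκ).2
    exact hk _ hb
  -- rank
  have hsum : ∀ φ : Cl → ZMod 2, (fun i => φ (l i) + φ (r i)) = ∑ κ ∈ C, φ κ • b κ := by
    intro φ
    have : ∑ κ ∈ C, φ κ • b κ = ∑ κ, φ κ • b κ := by
      apply Finset.sum_subset (Finset.subset_univ _)
      intro κ _ hκ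
      have : b κ = 0 := by
        by_contra h
        exact hκ (Finset.mem_filter.2 ⟨Finset.mem_univ _, h⟩)
      simp [this]
    rw [this]
    ext i
    simp [b, Finset.sum_apply, mul_add, Finset.sum_add_distrib, Pi.single_apply]
  let L : (C → ZMod 2) →ₗ[ZMod 2] (EH → ZMod 2) :=
    Fintype.linearCombination (ZMod 2) (fun κ : C => b κ)
  have hL : ∀ φ : Cl → ZMod 2, L (fun κ => φ κ) = fun i => φ (l i) + φ (r i) := by
    intro φ
    rw [hsum]
    simp only [L, Fintype.linearCombination_apply]
    exact Finset.sum_coe_sort C (fun κ => φ κ • b κ)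
  have hrange : m ≤ Module.finrank (ZMod 2) (LinearMap.range L) := by
    have : ∀ j, cyc j ∈ LinearMap.range L := by
      intro j
      refine ⟨fun κ => ψ j κ, ?_⟩
      rw [hL]
      ext i
      exact (hψ j i).symm
    have h2 := LinearIndependent.of_comp (v := fun j => (⟨cyc j, this j⟩ : LinearMap.range L))
      (LinearMap.range L).subtype (by exact hli)
    simpa using h2.fintype_card_le_finrank
  have hker : 1 ≤ Module.finrank (ZMod 2) (LinearMap.ker L) := by
    have hne : C.Nonempty := by
      by_contra h
      rw [Finset.not_nonempty_iff_eq_empty] at h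
      have h3 := hsum (ψ ⟨0, hm⟩)
      rw [h] at h3
      apply hli.ne_zero ⟨0, hm⟩
      ext i
      rw [hψ]
      simpa using congrFun h3 i
    obtain ⟨κ0, hκ0⟩ := hne
    have hone : (fun _ => 1 : C → ZMod 2) ∈ LinearMap.ker L := by
      rw [LinearMap.mem_ker, hL (fun _ => 1)]
      ext i
      exact CharTwo.add_self_eq_zero _
    have : Nontrivial (LinearMap.ker L) := by
      refine ⟨⟨⟨_, hone⟩, 0, ?_⟩⟩
      intro h
      have := congrFun (congrArg Subtype.val h) ⟨κ0, hκ0⟩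
      simp at this
    exact Module.finrank_pos
  have hrn := LinearMap.finrank_range_add_finrank_ker L
  rw [Module.finrank_fintype_fun_eq_card, Fintype.card_coe] at hrn
  calc k * (m + 1) ≤ k * C.card := by gcongr; omega
    _ ≤ _ := h1

lemma path_exists {V E W : Type*} [Fintype E] [DecidableEq E] (src tgt : E → V)
    (G : SimpleGraph V)
    (hG : ∀ u v, G.Adj u v → ∃ e, (src e = u ∧ tgt e = v) ∨ (src e = v ∧ tgt e = u))
    (f : V → Option W) (w : W) (u v : {v | f v = some w})
    (h : (G.induce {v | f v = some w}).Reachable u v) :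
    ∃ P : E → ZMod 2, (∀ p : V → ZMod 2, ∑ e, P e * (p (src e) + p (tgt e)) = p u + p v) ∧
      ∀ e, P e ≠ 0 → f (src e) = some w ∧ f (tgt e) = some w := by
  obtain ⟨wk⟩ := h
  induction wk with
  | nil =>
    refine ⟨0, fun p => ?_, fun e he => absurd rfl he⟩
    simp [CharTwo.add_self_eq_zero]
  | @cons a b c hab _ ih =>
    obtain ⟨P, hP, hP'⟩ := ih
    obtain ⟨e0, he0⟩ := hG a b hab
    refine ⟨P + Pi.single e0 1, fun p => ?_, fun e he => ?_⟩
    · have : p (src e0) + p (tgt e0) = p a + p b := by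
        rcases he0 with ⟨h1, h2⟩ | ⟨h1, h2⟩ <;> rw [h1, h2]
        exact add_comm _ _
      simp only [Pi.add_apply, add_mul, Finset.sum_add_distrib, hP]
      simp only [Pi.single_apply, ite_mul, one_mul, zero_mul, Finset.sum_ite_eq',
        Finset.mem_univ, if_true, this]
      linear_combination (p b) * (CharTwo.two_eq_zero (R := ZMod 2))
    · by_cases h : e = e0
      · subst h
        rcases he0 with ⟨h1, h2⟩ | ⟨h1, h2⟩ <;> rw [h1, h2]
        · exact ⟨a.2, b.2⟩
        · exact ⟨b.2, a.2⟩
      · apply hP'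
        simpa [h] using he

theorem no_minor {V E F W EH : Type*} [Fintype E] [Finite F] [Fintype EH]
    (src tgt : E → V) (lf rf : E → F) (G : SimpleGraph V)
    (hG : ∀ u v, G.Adj u v → ∃ e, (src e = u ∧ tgt e = v) ∨ (src e = v ∧ tgt e = u))
    (hQ : ∀ (φ : F → ZMod 2) (p : V → ZMod 2),
      ∑ e, (φ (lf e) + φ (rf e)) * (p (src e) + p (tgt e)) = 0)
    (hP : ∀ z : E → ZMod 2, (∀ p : V → ZMod 2, ∑ e, z e * (p (src e) + p (tgt e)) = 0) →
      ∃ φ : F → ZMod 2, ∀ e, z e = φ (lf e) + φ (rf e))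
    (H : SimpleGraph W) (a b : EH → W) (hH : ∀ i, H.Adj (a i) (b i))
    (hinj : Function.Injective (fun i => s(a i, b i)))
    (m k : ℕ) (hm : 0 < m) (cyc : Fin m → EH → ZMod 2) (hli : LinearIndependent (ZMod 2) cyc)
    (hcyc : ∀ j, ∀ p : W → ZMod 2, ∑ i, cyc j i * (p (a i) + p (b i)) = 0)
    (hk : ∀ y : EH → ZMod 2, (∀ p : W → ZMod 2, ∑ i, y i * (p (a i) + p (b i)) = 0) → y ≠ 0 →
      k ≤ (Finset.univ.filter (fun i => y i ≠ 0)).card)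
    (hcount : 2 * Fintype.card EH < k * (m + 1)) : ¬ HasMinor G H := by
  classical
  rintro ⟨f, hroot, hconn, hadj⟩
  choose root hroot using hroot
  choose v1 v2 hv1 hv2 hv using fun i => hadj _ _ (hH i)
  choose c hc using fun i => hG _ _ (hv i)
  have hcs : ∀ i (p : V → ZMod 2), p (src (c i)) + p (tgt (c i)) = p (v1 i) + p (v2 i) := by
    intro i p
    rcases hc i with ⟨h1, h2⟩ | ⟨h1, h2⟩ <;> rw [h1, h2]
    exact add_comm _ _
  have hcne : ∀ i w, ¬ (f (src (c i)) = some w ∧ f (tgt (c i)) = some w) := by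
    rintro i w ⟨h3, h4⟩
    apply (hH i).ne
    rcases hc i with ⟨h1, h2⟩ | ⟨h1, h2⟩ <;> rw [h1] at h3 <;> rw [h2] at h4 <;>
      grind
  have hcinj : Function.Injective c := by
    intro i j hij
    apply hinj
    have e1 := hc i
    have e2 := hc j
    rw [hij] at e1
    have := hv1 i; have := hv2 i; have := hv1 j; have := hv2 j
    simp only [Sym2.eq_iff]
    grind
  have hpath : ∀ v w, f v = some w → ∃ P : E → ZMod 2,
      (∀ p : V → ZMod 2, ∑ e, P e * (p (src e) + p (tgt e)) = p v + p (root w)) ∧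
      ∀ e, P e ≠ 0 → f (src e) = some w ∧ f (tgt e) = some w := fun v w h =>
    path_exists src tgt G hG f w ⟨v, h⟩ ⟨root w, hroot w⟩ (hconn w _ _)
  choose P1 hP1 hP1' using fun i => hpath _ _ (hv1 i)
  choose P2 hP2 hP2' using fun i => hpath _ _ (hv2 i)
  let z : Fin m → E → ZMod 2 := fun j e =>
    ∑ i, cyc j i * ((Pi.single (c i) 1 : E → ZMod 2) e + P1 i e + P2 i e)
  have hz : ∀ j, ∀ p : V → ZMod 2, ∑ e, z j e * (p (src e) + p (tgt e)) = 0 := by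
    intro j p
    simp only [z, Finset.sum_mul]
    rw [Finset.sum_comm]
    rw [← hcyc j (fun w => p (root w))]
    apply Finset.sum_congr rfl
    intro i _
    have : ∑ e, ((Pi.single (c i) 1 : E → ZMod 2) e + P1 i e + P2 i e) * (p (src e) + p (tgt e))
        = p (root (a i)) + p (root (b i)) := by
      simp only [add_mul (_ + _) , add_mul (Pi.single _ _ _), Finset.sum_add_distrib, hP1, hP2]
      simp only [Pi.single_apply, ite_mul, one_mul, zero_mul, Finset.sum_ite_eq',
        Finset.mem_univ, if_true, hcs]
      linear_combination (p (v1 i) + p (v2 i)) * (CharTwo.two_eq_zero (R := ZMod 2))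
    rw [← this, Finset.mul_sum]
    exact Finset.sum_congr rfl fun e _ => mul_assoc _ _ _
  choose φ hφ using fun j => hP (z j) (hz j)
  let S : E → Prop := fun e => (∃ i, c i = e) ∨ ∃ w, f (src e) = some w ∧ f (tgt e) = some w
  have hzS : ∀ j e, ¬ S e → z j e = 0 := by
    intro j e he
    simp only [S, not_or, not_exists] at he
    apply Finset.sum_eq_zero
    intro i _
    have q1 : P1 i e = 0 := by
      by_contra h
      exact he.2 _ (hP1' i e h)
    have q2 : P2 i e = 0 := by
      by_contra h
      exact he.2 _ (hP2' i e h)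
    simp [q1, q2, Ne.symm (he.1 i)]
  have hzc : ∀ j i, z j (c i) = cyc j i := by
    intro j i
    have : ∀ i', cyc j i' * ((Pi.single (c i') 1 : E → ZMod 2) (c i) + P1 i' (c i) + P2 i' (c i))
        = if i' = i then cyc j i else 0 := by
      intro i'
      have q1 : P1 i' (c i) = 0 := by
        by_contra h
        exact hcne i _ (hP1' i' _ h)
      have q2 : P2 i' (c i) = 0 := by
        by_contra h
        exact hcne i _ (hP2' i' _ h)
      by_cases h : i' = i
      · subst h; simp [q1, q2]
      · have : c i ≠ c i' := fun h' => h (hcinj h').symm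
        simp [q1, q2, h, this]
    simp only [z, this]
    simp
  let rel : F → F → Prop := fun x y => ∃ e, ¬ S e ∧ lf e = x ∧ rf e = y
  have : Finite (Quot rel) := Quot.finite rel
  have := Fintype.ofFinite (Quot rel)
  have key := class_count (fun i => Quot.mk rel (lf (c i))) (fun i => Quot.mk rel (rf (c i)))
    m k hm cyc hli
    (fun j => Quot.lift (φ j) (by
      rintro x y ⟨e, he, rfl, rfl⟩
      have := hφ j e
      rw [hzS j e he] at this
      exact CharTwo.add_eq_zero.1 this.symm))
    (by
      intro j i
      rw [← hzc, hφ])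
    (by
      intro ψ hne
      apply hk _ _ hne
      intro p
      let q : V → ZMod 2 := fun v => (f v).elim 0 p
      have h0 := hQ (fun x => ψ (Quot.mk rel x)) q
      rw [← h0]
      apply Fintype.sum_of_injective c hcinj
      · intro e he
        by_cases hS : S e
        · rcases hS with ⟨i, hi⟩ | ⟨w, h1, h2⟩
          · exact absurd ⟨i, hi⟩ he
          · simp [q, h1, h2, CharTwo.add_self_eq_zero]
        · have : Quot.mk rel (lf e) = Quot.mk rel (rf e) := Quot.sound ⟨e, hS, rfl, rfl⟩
          simp [this, CharTwo.add_self_eq_zero]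
      · intro i
        rw [hcs]
        simp [q, hv1, hv2])
  omega

/-! ### The target graphs `K₅` and `K₃,₃` -/

theorem even_other {W EH : Type*} [Fintype EH] [DecidableEq W] (a b : EH → W)
    (y : EH → ZMod 2)
    (h : ∀ p : W → ZMod 2, ∑ i, y i * (p (a i) + p (b i)) = 0) (i : EH) (hi : y i ≠ 0)
    (hab : a i ≠ b i) (w : W) (hw : a i = w ∨ b i = w) :
    ∃ j, j ≠ i ∧ y j ≠ 0 ∧ (a j = w ∨ b j = w) := by
  by_contra! hc
  have := h (Pi.single w 1)
  rw [Finset.sum_eq_single i] at this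
  · rcases hw with hw | hw
    · subst hw
      simp [hab.symm, hi] at this
    · subst hw
      simp [hab, hi] at this
  · intro j _ hj
    by_cases hy : y j = 0
    · simp [hy]
    · obtain ⟨h1, h2⟩ := hc j hj hy
      simp [h1, h2]
  · simp

theorem even_k5 (y : Fin 10 → ZMod 2)
    (h : ∀ p : Fin 5 → ZMod 2, ∑ i, y i *
      (p ((![0,0,0,0,1,1,1,2,2,3] : Fin 10 → Fin 5) i) +
        p ((![1,2,3,4,2,3,4,3,4,4] : Fin 10 → Fin 5) i)) = 0) (hy : y ≠ 0) :
    3 ≤ (Finset.univ.filter (y · ≠ 0)).card := by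
  obtain ⟨i, hi⟩ := Function.ne_iff.1 hy
  have hi : y i ≠ 0 := hi
  have hab : ∀ i, (![0,0,0,0,1,1,1,2,2,3] : Fin 10 → Fin 5) i ≠
      (![1,2,3,4,2,3,4,3,4,4] : Fin 10 → Fin 5) i := by decide
  obtain ⟨j, hj, hyj, hj'⟩ := even_other _ _ y h i hi (hab i) _ (Or.inl rfl)
  obtain ⟨k, hk, hyk, hk'⟩ := even_other _ _ y h i hi (hab i) _ (Or.inr rfl)
  have hjk : j ≠ k := by
    rintro rfl
    clear * - hj hj' hk'
    revert i j
    decide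
  rw [← Finset.card_eq_three.2 ⟨i, j, k, hj.symm, hk.symm, hjk, rfl⟩]
  apply Finset.card_le_card
  intro e he
  simp at he
  rcases he with rfl | rfl | rfl <;> simpa

theorem even_k33 (y : Fin 3 × Fin 3 → ZMod 2)
    (h : ∀ p : Fin 3 ⊕ Fin 3 → ZMod 2, ∑ i, y i *
      (p (Sum.inl i.1) + p (Sum.inr i.2)) = 0) (hy : y ≠ 0) :
    4 ≤ (Finset.univ.filter (y · ≠ 0)).card := by
  obtain ⟨⟨a, b⟩, hi⟩ := Function.ne_iff.1 hy
  have hi : y (a, b) ≠ 0 := hi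
  obtain ⟨⟨a1, b1⟩, hj, hyj, hj'⟩ := even_other _ _ y h _ hi (by simp) _ (Or.inl rfl)
  obtain ⟨⟨a2, b2⟩, hk, hyk, hk'⟩ := even_other _ _ y h _ hi (by simp) _ (Or.inr rfl)
  obtain ⟨⟨a3, b3⟩, hl, hyl, hl'⟩ := even_other _ _ y h _ hyk (by simp) _ (Or.inl rfl)
  simp at hj' hk' hl'
  subst hj' hk' hl'
  have : ({(a1, b2), (a1, b1), (a3, b2), (a3, b3)} : Finset (Fin 3 × Fin 3)).card = 4 := by
    simp at hj hk hl
    rw [Finset.card_insert_of_notMem, Finset.card_insert_of_notMem, Finset.card_insert_of_notMem,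
      Finset.card_singleton] <;> simp <;> grind
  rw [← this]
  apply Finset.card_le_card
  intro e he
  simp at he
  rcases he with rfl | rfl | rfl | rfl <;> simpa

theorem li_of_eval {m : ℕ} {EH : Type*} (cyc : Fin m → EH → ZMod 2) (s : Fin m → EH)
    (hs : ∀ i j, cyc i (s j) = if i = j then 1 else 0) : LinearIndependent (ZMod 2) cyc := by
  rw [Fintype.linearIndependent_iff]
  intro c hc j
  have := congrFun hc (s j)
  simpa [hs] using this

theorem no_k5_k33 {V E F : Type*} [Fintype E] [Finite F] (src tgt : E → V) (lf rf : E → F)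
    (G : SimpleGraph V)
    (hG : ∀ u v, G.Adj u v → ∃ e, (src e = u ∧ tgt e = v) ∨ (src e = v ∧ tgt e = u))
    (hQ : ∀ (φ : F → ZMod 2) (p : V → ZMod 2),
      ∑ e, (φ (lf e) + φ (rf e)) * (p (src e) + p (tgt e)) = 0)
    (hP : ∀ z : E → ZMod 2, (∀ p : V → ZMod 2, ∑ e, z e * (p (src e) + p (tgt e)) = 0) →
      ∃ φ : F → ZMod 2, ∀ e, z e = φ (lf e) + φ (rf e)) : IsPlanar G := by
  have e2 : (2 : ZMod 2) = 0 := rfl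
  constructor
  · apply no_minor src tgt lf rf G hG hQ hP (completeGraph (Fin 5))
      (![0,0,0,0,1,1,1,2,2,3] : Fin 10 → Fin 5) (![1,2,3,4,2,3,4,3,4,4] : Fin 10 → Fin 5)
      (by simp [completeGraph]; decide) (by decide) 6 3 (by norm_num)
      ![![1,1,0,0,1,0,0,0,0,0], ![1,0,1,0,0,1,0,0,0,0], ![1,0,0,1,0,0,1,0,0,0],
        ![0,1,1,0,0,0,0,1,0,0], ![0,1,0,1,0,0,0,0,1,0], ![0,0,1,1,0,0,0,0,0,1]]
      (li_of_eval _ ![4,5,6,7,8,9] (by decide)) ?_ even_k5 (by simp)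
    intro j p
    fin_cases j <;> simp [Fin.sum_univ_succ] <;> ring_nf <;> simp [e2]
  · apply no_minor src tgt lf rf G hG hQ hP (completeBipartiteGraph (Fin 3) (Fin 3))
      (fun i : Fin 3 × Fin 3 => Sum.inl i.1) (fun i : Fin 3 × Fin 3 => Sum.inr i.2)
      (by simp) (by rintro ⟨a, b⟩ ⟨c, d⟩; simp) 4 4 (by norm_num)
      (fun j i => (![![![1,1,0], ![1,1,0], ![0,0,0]], ![![1,0,1], ![1,0,1], ![0,0,0]],
        ![![1,1,0], ![0,0,0], ![1,1,0]], ![![1,0,1], ![0,0,0], ![1,0,1]]] :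
          Fin 4 → Fin 3 → Fin 3 → ZMod 2) j i.1 i.2)
      (li_of_eval _ ![(1,1),(1,2),(2,1),(2,2)] (by decide)) ?_ even_k33 (by simp)
    intro j p
    rw [Fintype.sum_prod_type]
    fin_cases j <;> simp [Fin.sum_univ_succ] <;> ring_nf <;> simp [e2]

/-! ### Discrete calculus on `ZMod N` with values in `ZMod 2` -/

theorem zmod_step {N : ℕ} [NeZero N] (f : ZMod N → ZMod 2) (k : ZMod 2)
    (h : ∀ y, f (y + 1) = f y + k) (n : ℕ) : f (n : ZMod N) = f 0 + n * k := by
  induction n with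
  | zero => simp
  | succ n ih => push_cast; rw [h, ih]; ring

theorem zmod_const {N : ℕ} [NeZero N] (f : ZMod N → ZMod 2)
    (h : ∀ y, f (y + 1) = f y) (y : ZMod N) : f y = f 0 := by
  have := zmod_step f 0 (by simpa using h) y.val
  simpa using this

theorem zmod_prim {N : ℕ} [NeZero N] (δ : ZMod N → ZMod 2) (h : ∑ y, δ y = 0) :
    ∃ α : ZMod N → ZMod 2, α 0 = 0 ∧ ∀ y, α (y + 1) = α y + δ (y + 1) := by
  refine ⟨fun y => ∑ i ∈ Finset.range y.val, δ ((i : ZMod N) + 1), by simp, fun y => ?_⟩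
  have hN : 0 < N := Nat.pos_of_ne_zero (NeZero.ne N)
  have key : ∑ i ∈ Finset.range y.val, δ ((i : ZMod N) + 1) + δ (y + 1) =
      ∑ i ∈ Finset.range (y.val + 1), δ ((i : ZMod N) + 1) := by
    rw [Finset.sum_range_succ]; simp
  show _ = ∑ i ∈ Finset.range y.val, δ ((i : ZMod N) + 1) + δ (y + 1)
  rw [key]
  have hlt := ZMod.val_lt y
  by_cases hy : y.val + 1 = N
  · have h1 : y + 1 = 0 := by
      have : ((y.val + 1 : ℕ) : ZMod N) = 0 := by rw [hy]; simp
      simpa using this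
    rw [h1, hy]
    simp only [ZMod.val_zero, Finset.range_zero, Finset.sum_empty]
    symm
    rw [← h]
    have h2 : ∑ y : ZMod N, δ y = ∑ y : ZMod N, δ (y + 1) :=
      (Equiv.sum_comp (Equiv.addRight (1 : ZMod N)) δ).symm
    rw [h2]
    apply Finset.sum_bij (fun (i : ℕ) _ => (i : ZMod N))
    · simp
    · intro a ha b hb hab
      simp at ha hb
      have := congrArg ZMod.val hab
      rwa [ZMod.val_natCast_of_lt ha, ZMod.val_natCast_of_lt hb] at this
    · intro b _
      exact ⟨b.val, by simpa using ZMod.val_lt b, by simp⟩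
    · simp
  · have h1 : (y + 1).val = y.val + 1 := by
      have : ((y.val + 1 : ℕ) : ZMod N) = y + 1 := by simp
      rw [← this, ZMod.val_natCast_of_lt (by omega)]
    simp only [h1]

theorem two_zero : (2 : ZMod 2) = 0 := rfl

theorem coboundary {N : ℕ} [NeZero N] (hodd : Odd N) (g : ZMod N) (hg : g ^ 2 + g + 1 = 0)
    (w0 w1 : ZMod N → ZMod 2)
    (hst : ∀ y, w0 y + w0 (g * (y - 1)) + w1 (g ^ 2 * y) + w1 (g * (y - 1)) = 0) :
    ∃ α : ZMod N → ZMod 2, (∀ y, α (g * y) = α y) ∧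
      ∀ y, α y + α (y - 1) = w0 y + w0 (g * (y - 1)) := by
  have e2 := two_zero
  have hg3 : g ^ 3 = 1 := by linear_combination (g - 1) * hg
  set δ : ZMod N → ZMod 2 := fun y => w0 y + w0 (g * (y - 1)) with hδ
  have hcomm : ∀ y, δ y + δ (g ^ 2 * (y - 1)) = δ (g ^ 2 * y) + δ (y - g) := by
    intro y
    have h1 := hst y
    have h2 := hst (g ^ 2 * (y - 1))
    have h3 := hst (g * y + 1)
    simp only [hδ]
    have r1 : g * (g ^ 2 * (y - 1) - 1) = y + g ^ 2 := by
      linear_combination (y - 1) * hg3 - hg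
    have r2 : g ^ 2 * (g ^ 2 * (y - 1)) = g * (y - 1) := by
      linear_combination g * (y - 1) * hg3
    have r3 : g * (g * y + 1 - 1) = g ^ 2 * y := by ring
    have r4 : g ^ 2 * (g * y + 1) = y + g ^ 2 := by linear_combination y * hg3
    have r5 : g * (g ^ 2 * y - 1) = y - g := by linear_combination y * hg3
    have r6 : g * (y - g - 1) = g * y + 1 := by linear_combination - hg
    rw [r1, r2] at h2
    rw [r3, r4] at h3
    rw [r1, r5, r6]
    linear_combination h1 + h2 + h3 - (w0 (y - g) + w1 (g ^ 2 * y) + w1 (g * (y - 1))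
      + w1 (y + g ^ 2) + w0 (g ^ 2 * y) + w0 (g * y + 1)) * e2
  have hsum : ∑ y, δ y = 0 := by
    simp only [hδ, Finset.sum_add_distrib]
    have : ∑ y, w0 (g * (y - 1)) = ∑ y, w0 y := by
      apply Fintype.sum_bijective (fun y => g * (y - 1)) _ _ _ (fun _ => rfl)
      rw [Function.bijective_iff_has_inverse]
      refine ⟨fun x => g ^ 2 * x + 1, fun x => ?_, fun x => ?_⟩
      · show g ^ 2 * (g * (x - 1)) + 1 = x
        linear_combination (x - 1) * hg3
      · show g * (g ^ 2 * x + 1 - 1) = x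
        linear_combination x * hg3
    rw [this, CharTwo.add_self_eq_zero]
  obtain ⟨α, h0, hα⟩ := zmod_prim δ hsum
  have hα' : ∀ y, α y + α (y - 1) = δ y := by
    intro y
    have := hα (y - 1)
    simp only [sub_add_cancel] at this
    linear_combination this + α (y - 1) * e2
  refine ⟨α, ?_, hα'⟩
  have hκ : ∀ z, α (z + g) + α z + δ (g ^ 2 * z + 1) = α g + α 0 + δ 1 := by
    intro z
    have := zmod_const (fun z => α (z + g) + α z + δ (g ^ 2 * z + 1)) (fun z => ?_) z
    · simpa using this
    · have a1 := hα z
      have a2 := hα (z + g)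
      have a3 := hcomm (z + g + 1)
      have r1 : g ^ 2 * (z + g + 1 - 1) = g ^ 2 * z + 1 := by linear_combination hg3
      have r2 : g ^ 2 * (z + g + 1) = g ^ 2 * (z + 1) + 1 := by linear_combination hg3
      have r3 : z + g + 1 - g = z + 1 := by ring
      have r4 : z + 1 + g = z + g + 1 := by ring
      rw [r1, r2, r3] at a3
      simp only [r4]
      linear_combination a1 + a2 - a3 + δ (z + g + 1) * e2
  have hε : ∀ y, α (g * (y + 1)) + α (y + 1) = α (g * y) + α y + (α g + α 0 + δ 1) := by
    intro y
    have a1 := hκ (g * y)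
    have a2 := hα y
    have r1 : g ^ 2 * (g * y) + 1 = y + 1 := by linear_combination y * hg3
    have r2 : g * (y + 1) = g * y + g := by ring
    rw [r1] at a1
    rw [r2]
    linear_combination a1 + a2 - α (g * y) * e2
  have hk : α g + α 0 + δ 1 = 0 := by
    have := zmod_step (fun y => α (g * y) + α y) _ hε N
    simp at this
    have hN : ((N : ℕ) : ZMod 2) = 1 := by
      obtain ⟨m, rfl⟩ := hodd
      push_cast
      rw [e2]; ring
    rw [hN] at this
    simpa [h0] using this
  rw [hk] at hε
  intro y
  have := zmod_const (fun y => α (g * y) + α y) (by simpa using hε) y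
  simp [h0] at this
  linear_combination this - α y * e2

/-! ### The surface structure: two classes of blocks `K₅ - e` -/

/-- Block positions. -/
def emb {N : ℕ} (g : ZMod N) (b : Bool) (x : ZMod N) (l : Fin 5) : ZMod N × Fin 7 :=
  bif b then (![(x, 0), (g ^ 2 * x, 1), (g * (x - 1), 2), (x, 5), (x, 6)] :
    Fin 5 → ZMod N × Fin 7) l
  else (![(x, 0), (x, 1), (x, 2), (x, 3), (x, 4)] : Fin 5 → ZMod N × Fin 7) l

/-- First local end of a block edge. -/
def les : Fin 9 → Fin 5 := ![0, 1, 2, 0, 1, 2, 0, 1, 3]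
/-- Second local end of a block edge. -/
def ledEnd : Fin 9 → Fin 5 := ![1, 2, 0, 3, 3, 3, 4, 4, 4]
/-- Face on one side of a block edge. -/
def lfl : Fin 9 → Fin 8 := ![0, 1, 2, 4, 5, 6, 3, 3, 4]
/-- Face on the other side of a block edge. -/
def lfr : Fin 9 → Fin 8 := ![3, 6, 7, 7, 6, 7, 4, 5, 5]

/-- First end of an edge. -/
def esrc {N : ℕ} (g : ZMod N) (e : Bool × ZMod N × Fin 9) : ZMod N × Fin 7 :=
  emb g e.1 e.2.1 (les e.2.2)
/-- Second end of an edge. -/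
def etgt {N : ℕ} (g : ZMod N) (e : Bool × ZMod N × Fin 9) : ZMod N × Fin 7 :=
  emb g e.1 e.2.1 (ledEnd e.2.2)

/-- Gluing of outer face sides. -/
inductive FRel {N : ℕ} (g : ZMod N) : Bool × ZMod N × Fin 8 → Bool × ZMod N × Fin 8 → Prop
  | a0 (x : ZMod N) : FRel g (false, x, 0) (true, x, 0)
  | b0 (x : ZMod N) : FRel g (false, x, 0) (true, g * x, 0)
  | a1 (x : ZMod N) : FRel g (false, x, 1) (true, g * x, 1)
  | b1 (x : ZMod N) : FRel g (false, x, 1) (true, g ^ 2 * x + 1, 1)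
  | a2 (x : ZMod N) : FRel g (false, x, 2) (true, g ^ 2 * x + 1, 2)
  | b2 (x : ZMod N) : FRel g (false, x, 2) (true, x, 2)

theorem edge_sum {N : ℕ} [NeZero N] (g : ZMod N) (hg : g ^ 2 + g + 1 = 0)
    (z : Bool × ZMod N × Fin 9 → ZMod 2) (p : ZMod N × Fin 7 → ZMod 2) :
    ∑ e, z e * (p (esrc g e) + p (etgt g e)) = ∑ x : ZMod N,
      (p (x, 0) * (z (false, x, 0) + z (false, x, 2) + z (false, x, 3) + z (false, x, 6)
          + (z (true, x, 0) + z (true, x, 2) + z (true, x, 3) + z (true, x, 6)))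
        + p (x, 1) * (z (false, x, 0) + z (false, x, 1) + z (false, x, 4) + z (false, x, 7)
          + (z (true, g * x, 0) + z (true, g * x, 1) + z (true, g * x, 4) + z (true, g * x, 7)))
        + p (x, 2) * (z (false, x, 1) + z (false, x, 2) + z (false, x, 5)
          + (z (true, g ^ 2 * x + 1, 1) + z (true, g ^ 2 * x + 1, 2)
            + z (true, g ^ 2 * x + 1, 5)))
        + p (x, 3) * (z (false, x, 3) + z (false, x, 4) + z (false, x, 5) + z (false, x, 8))
        + p (x, 4) * (z (false, x, 6) + z (false, x, 7) + z (false, x, 8))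
        + p (x, 5) * (z (true, x, 3) + z (true, x, 4) + z (true, x, 5) + z (true, x, 8))
        + p (x, 6) * (z (true, x, 6) + z (true, x, 7) + z (true, x, 8))) := by
  have hg3 : g ^ 3 = 1 := by linear_combination (g - 1) * hg
  have s1 : ∀ f : ZMod N → ZMod 2, ∑ x, f x = ∑ x, f (g * x) := by
    intro f
    symm
    apply Fintype.sum_bijective (fun y => g * y) _ _ _ (fun _ => rfl)
    rw [Function.bijective_iff_has_inverse]
    refine ⟨fun x => g ^ 2 * x, fun x => ?_, fun x => ?_⟩
    · show g ^ 2 * (g * x) = x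
      linear_combination x * hg3
    · show g * (g ^ 2 * x) = x
      linear_combination x * hg3
  have s2 : ∀ f : ZMod N → ZMod 2, ∑ x, f x = ∑ x, f (g ^ 2 * x + 1) := by
    intro f
    symm
    apply Fintype.sum_bijective (fun y => g ^ 2 * y + 1) _ _ _ (fun _ => rfl)
    rw [Function.bijective_iff_has_inverse]
    refine ⟨fun x => g * (x - 1), fun x => ?_, fun x => ?_⟩
    · show g * (g ^ 2 * x + 1 - 1) = x
      linear_combination x * hg3
    · show g ^ 2 * (g * (x - 1)) + 1 = x
      linear_combination (x - 1) * hg3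
  rw [Fintype.sum_prod_type]
  simp only [Fintype.sum_prod_type, Fintype.sum_bool]
  have t1 := s1 (fun y => p (g ^ 2 * y, 1) *
    (z (true, y, 0) + z (true, y, 1) + z (true, y, 4) + z (true, y, 7)))
  have t2 := s2 (fun y => p (g * (y - 1), 2) *
    (z (true, y, 1) + z (true, y, 2) + z (true, y, 5)))
  have r1 : ∀ x, g ^ 2 * (g * x) = x := fun x => by linear_combination x * hg3
  have r2 : ∀ x, g * (g ^ 2 * x + 1 - 1) = x := fun x => by linear_combination x * hg3
  simp only [r1, r2] at t1 t2
  have u : ∑ x : ZMod N, ∑ i : Fin 9,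
        z (true, x, i) * (p (esrc g (true, x, i)) + p (etgt g (true, x, i))) =
      ∑ x : ZMod N, (p (x, 0) * (z (true, x, 0) + z (true, x, 2) + z (true, x, 3) + z (true, x, 6))
        + p (x, 5) * (z (true, x, 3) + z (true, x, 4) + z (true, x, 5) + z (true, x, 8))
        + p (x, 6) * (z (true, x, 6) + z (true, x, 7) + z (true, x, 8)))
      + ∑ y, p (g ^ 2 * y, 1) *
        (z (true, y, 0) + z (true, y, 1) + z (true, y, 4) + z (true, y, 7))
      + ∑ y, p (g * (y - 1), 2) *
        (z (true, y, 1) + z (true, y, 2) + z (true, y, 5)) := by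
    rw [← Finset.sum_add_distrib, ← Finset.sum_add_distrib]
    apply Finset.sum_congr rfl
    intro x _
    simp only [Fin.sum_univ_succ, esrc, etgt, emb, les, ledEnd]
    simp
    ring_nf
  rw [u, t1, t2, ← Finset.sum_add_distrib, ← Finset.sum_add_distrib, ← Finset.sum_add_distrib]
  apply Finset.sum_congr rfl
  intro x _
  simp only [Fin.sum_univ_succ, esrc, etgt, emb, les, ledEnd]
  simp
  ring_nf

/-- The ambient planar graph. -/
def Gp {N : ℕ} (g : ZMod N) : SimpleGraph (ZMod N × Fin 7) :=
  SimpleGraph.fromRel (fun u v => ∃ e, esrc g e = u ∧ etgt g e = v)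

theorem minor_comap {V V' W : Type*} (ι : V → V') (hι : Function.Injective ι)
    (G : SimpleGraph V') (H : SimpleGraph W) (h : HasMinor (G.comap ι) H) : HasMinor G H := by
  obtain ⟨f, h1, h2, h3⟩ := h
  refine ⟨Function.extend ι f (fun _ => none), ?_, ?_, ?_⟩
  · intro w
    obtain ⟨v, hv⟩ := h1 w
    exact ⟨ι v, by rw [hι.extend_apply, hv]⟩
  · intro w
    rintro ⟨u, hu⟩ ⟨v, hv⟩
    have mem : ∀ u, Function.extend ι f (fun _ => none) u = some w → ∃ x, ι x = u := by
      intro u hu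
      by_contra hne
      rw [Function.extend_apply' _ _ _ hne] at hu
      cases hu
    obtain ⟨x, rfl⟩ := mem u hu
    obtain ⟨y, rfl⟩ := mem v hv
    have hx : f x = some w := by
      have := hu
      simpa [hι.extend_apply] using this
    have hy : f y = some w := by
      have := hv
      simpa [hι.extend_apply] using this
    have := h2 w ⟨x, hx⟩ ⟨y, hy⟩
    let φ : (G.comap ι).induce {v | f v = some w} →g
        G.induce {v | Function.extend ι f (fun _ => none) v = some w} :=
      { toFun := fun v => ⟨ι v.1, by
          have := v.2
          simp only [Set.mem_ofPred_eq] at this ⊢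
          rw [hι.extend_apply, this]⟩
        map_rel' := by
          intro a b hab
          exact hab }
    exact this.map φ
  · intro w1 w2 hw
    obtain ⟨a, b, ha, hb, hab⟩ := h3 w1 w2 hw
    exact ⟨ι a, ι b, by rw [hι.extend_apply, ha], by rw [hι.extend_apply, hb], hab⟩

theorem planar_comap {V V' : Type*} (ι : V → V') (hι : Function.Injective ι)
    (G : SimpleGraph V') (h : IsPlanar G) : IsPlanar (G.comap ι) :=
  ⟨fun h' => h.1 (minor_comap ι hι G _ h'), fun h' => h.2 (minor_comap ι hι G _ h')⟩

theorem planar_Gp {N : ℕ} [NeZero N] (hodd : Odd N) (g : ZMod N) (hg : g ^ 2 + g + 1 = 0) :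
    IsPlanar (Gp g) := by
  have e2 := two_zero
  have hg3 : g ^ 3 = 1 := by linear_combination (g - 1) * hg
  have r1 : ∀ x, g * (g ^ 2 * x) = x := fun x => by linear_combination x * hg3
  have r2 : ∀ x, g ^ 2 * (g * (x - 1)) + 1 = x := fun x => by linear_combination (x - 1) * hg3
  have r3 : ∀ x, g ^ 2 * (g * x) = x := fun x => by linear_combination x * hg3
  have r4 : ∀ x, g * (g ^ 2 * x + 1 - 1) = x := fun x => by linear_combination x * hg3
  apply no_k5_k33 (esrc g) (etgt g)
    (fun e => Quot.mk (FRel g) (e.1, e.2.1, lfl e.2.2))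
    (fun e => Quot.mk (FRel g) (e.1, e.2.1, lfr e.2.2)) (Gp g)
  · intro u v huv
    rw [Gp, SimpleGraph.fromRel_adj] at huv
    rcases huv with ⟨_, ⟨e, h⟩ | ⟨e, h⟩⟩
    · exact ⟨e, Or.inl h⟩
    · exact ⟨e, Or.inr h⟩
  · intro φ p
    rw [edge_sum g hg]
    apply Finset.sum_eq_zero
    intro x _
    have a0 := congrArg φ (Quot.sound (FRel.a0 (g := g) x))
    have a1 := congrArg φ (Quot.sound (FRel.a1 (g := g) x))
    have a2 := congrArg φ (Quot.sound (FRel.a2 (g := g) x))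
    have b0 := congrArg φ (Quot.sound (FRel.b0 (g := g) x))
    have b1 := congrArg φ (Quot.sound (FRel.b1 (g := g) x))
    have b2 := congrArg φ (Quot.sound (FRel.b2 (g := g) x))
    simp only [lfl, lfr]
    simp [← a0, ← b0, ← a1, ← b1, ← a2, ← b2]
    ring_nf
    simp [e2]
  · intro z hz
    simp only [edge_sum g hg] at hz
    have ext : ∀ (x : ZMod N) (c : Fin 7), _ := fun x c =>
      hz (fun v => if v = (x, c) then 1 else 0)
    have v0 := fun x => ext x 0
    have v1 := fun x => ext x 1
    have v2 := fun x => ext x 2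
    have v3 := fun x => ext x 3
    have v4 := fun x => ext x 4
    have v5 := fun x => ext x 5
    have v6 := fun x => ext x 6
    clear ext
    simp at v0 v1 v2 v3 v4 v5 v6
    have w1 := fun y => v1 (g ^ 2 * y)
    have w2 := fun y => v2 (g * (y - 1))
    simp only [r1, r2] at w1 w2
    obtain ⟨α, hα1, hα2⟩ := coboundary hodd g hg
      (fun x => z (false, x, 0) + z (false, x, 2) + z (false, x, 3) + z (false, x, 6))
      (fun x => z (false, x, 0) + z (false, x, 1) + z (false, x, 4) + z (false, x, 7)) (by
        intro y
        linear_combination (norm := (ring_nf; reduce_mod_char)) v0 y + w1 y + w2 y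
          + v3 (g * (y - 1)) + v4 (g * (y - 1)) + v5 y + v6 y)
    have hα3 : ∀ y, α (g ^ 2 * y) = α y := fun y => by rw [← hα1 (g ^ 2 * y), r1]
    let A : ZMod N → Fin 8 → ZMod 2 := fun x =>
      let o0 := α x
      let o1 := α x + (z (false, x, 0) + z (false, x, 1) + z (false, x, 4) + z (false, x, 7))
      let o2 := α x + (z (false, x, 0) + z (false, x, 2) + z (false, x, 3) + z (false, x, 6))
      ![o0, o1, o2, o0 + z (false, x, 0), o2 + z (false, x, 2) + z (false, x, 3),
        o1 + z (false, x, 1) + z (false, x, 4), o1 + z (false, x, 1), o2 + z (false, x, 2)]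
    let B : ZMod N → Fin 8 → ZMod 2 := fun y =>
      let o0 := α y
      let o1 := α y + (z (true, y, 0) + z (true, y, 1) + z (true, y, 4) + z (true, y, 7))
      let o2 := α y + (z (true, y, 0) + z (true, y, 2) + z (true, y, 3) + z (true, y, 6))
      ![o0, o1, o2, o0 + z (true, y, 0), o2 + z (true, y, 2) + z (true, y, 3),
        o1 + z (true, y, 1) + z (true, y, 4), o1 + z (true, y, 1), o2 + z (true, y, 2)]
    have hrel : ∀ a b, FRel g a b →
        (bif a.1 then B a.2.1 a.2.2 else A a.2.1 a.2.2) =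
        (bif b.1 then B b.2.1 b.2.2 else A b.2.1 b.2.2) := by
      rintro _ _ (x | x | x | x | x | x)
      · simp [A, B]
      · simp [A, B, hα1]
      · simp [A, B, hα1]
        linear_combination (norm := (ring_nf; reduce_mod_char)) v1 x
      · simp [A, B]
        have h1 := hα2 (g ^ 2 * x + 1)
        simp only [add_sub_cancel_right, hα3, r1] at h1
        linear_combination (norm := (ring_nf; reduce_mod_char)) h1 + v0 (g ^ 2 * x + 1)
          + v2 x + v3 x + v4 x + v5 (g ^ 2 * x + 1) + v6 (g ^ 2 * x + 1)
      · simp [A, B]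
        have h1 := hα2 (g ^ 2 * x + 1)
        simp only [add_sub_cancel_right, hα3, r1] at h1
        linear_combination (norm := (ring_nf; reduce_mod_char)) h1 + v0 (g ^ 2 * x + 1)
      · simp [A, B]
        linear_combination (norm := (ring_nf; reduce_mod_char)) v0 x
    refine ⟨Quot.lift (fun a => bif a.1 then B a.2.1 a.2.2 else A a.2.1 a.2.2) hrel, ?_⟩
    rintro ⟨b, x, i⟩
    show z (b, x, i) = (bif b then B x (lfl i) else A x (lfl i)) +
      (bif b then B x (lfr i) else A x (lfr i))
    cases b
    · have h3 := v3 x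
      have h4 := v4 x
      fin_cases i <;> simp [A, B, lfl, lfr]
      · linear_combination (norm := (ring_nf; reduce_mod_char))
      · linear_combination (norm := (ring_nf; reduce_mod_char))
      · linear_combination (norm := (ring_nf; reduce_mod_char))
      · linear_combination (norm := (ring_nf; reduce_mod_char))
      · linear_combination (norm := (ring_nf; reduce_mod_char))
      · linear_combination (norm := (ring_nf; reduce_mod_char)) h3 + h4
      · linear_combination (norm := (ring_nf; reduce_mod_char))
      · linear_combination (norm := (ring_nf; reduce_mod_char))
      · linear_combination (norm := (ring_nf; reduce_mod_char)) h4
    · have h3 := v5 x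
      have h4 := v6 x
      fin_cases i <;> simp [A, B, lfl, lfr]
      · linear_combination (norm := (ring_nf; reduce_mod_char))
      · linear_combination (norm := (ring_nf; reduce_mod_char))
      · linear_combination (norm := (ring_nf; reduce_mod_char))
      · linear_combination (norm := (ring_nf; reduce_mod_char))
      · linear_combination (norm := (ring_nf; reduce_mod_char))
      · linear_combination (norm := (ring_nf; reduce_mod_char)) h3 + h4
      · linear_combination (norm := (ring_nf; reduce_mod_char))
      · linear_combination (norm := (ring_nf; reduce_mod_char))
      · linear_combination (norm := (ring_nf; reduce_mod_char)) h4

/-! ### Abstract exclusion of `Θ₆` -/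

/-- Two partial block partitions, coincidences recorded by `D`. -/
structure TwoBlocks {V R : Type*} (b1 b2 : V → Option R) (D : R → R → Prop) : Prop where
  dbl : ∀ u v x y, u ≠ v → b1 u = some x → b1 v = some x → b2 u = some y → b2 v = some y → D x y
  d1 : ∀ x y y', D x y → D x y' → y = y'
  d2 : ∀ x x' y, D x y → D x' y → x = x'
  alt : ∀ a b c d x y x' y', a ≠ b → b ≠ c → c ≠ d → d ≠ a → a ≠ c → b ≠ d →
    b1 a = some x → b1 b = some x → b2 b = some y → b2 c = some y →
    b1 c = some x' → b1 d = some x' → b2 d = some y' → b2 a = some y' → False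

/-- Same block of one of the two classes. -/
def BRel {V R : Type*} (b1 b2 : V → Option R) (u v : V) : Prop :=
  (∃ x, b1 u = some x ∧ b1 v = some x) ∨ (∃ y, b2 u = some y ∧ b2 v = some y)

/-- Superblocks. -/
def SBlk {V R : Type*} (b1 b2 : V → Option R) (D : R → R → Prop) (i : Bool) (x : R) (v : V) : Prop :=
  bif i then (b2 v = some x ∨ ∃ y, D y x ∧ b1 v = some y)
    else (b1 v = some x ∨ ∃ y, D x y ∧ b2 v = some y)

section
variable {V R : Type*} {b1 b2 : V → Option R} {D : R → R → Prop}

theorem cyc3 (p q r : V) (h1 : BRel b1 b2 p q) (h2 : BRel b1 b2 q r) (h3 : BRel b1 b2 r p) :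
    ∃ i x, SBlk b1 b2 D i x p ∧ SBlk b1 b2 D i x q ∧ SBlk b1 b2 D i x r := by
  rw [Bool.exists_bool]
  simp only [BRel, SBlk, cond_true, cond_false] at *
  rcases h1 with ⟨x, h1, h1'⟩ | ⟨x, h1, h1'⟩ <;> rcases h2 with ⟨y, h2, h2'⟩ | ⟨y, h2, h2'⟩ <;>
    rcases h3 with ⟨z, h3, h3'⟩ | ⟨z, h3, h3'⟩ <;> grind

theorem cyc4 (hT : TwoBlocks b1 b2 D) (p q r s : V) (h1 : BRel b1 b2 p q) (h2 : BRel b1 b2 q r)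
    (h3 : BRel b1 b2 r s) (h4 : BRel b1 b2 s p)
    (n1 : p ≠ q) (n2 : q ≠ r) (n3 : r ≠ s) (n4 : s ≠ p) (n5 : p ≠ r) (n6 : q ≠ s) :
    ∃ i x, SBlk b1 b2 D i x p ∧ SBlk b1 b2 D i x q ∧ SBlk b1 b2 D i x r ∧ SBlk b1 b2 D i x s := by
  have := hT.dbl p r
  have := hT.dbl q s
  have := hT.alt p q r s
  have := hT.alt q r s p
  rw [Bool.exists_bool]
  simp only [BRel, SBlk, cond_true, cond_false] at *
  rcases h1 with ⟨x, h1, h1'⟩ | ⟨x, h1, h1'⟩ <;> rcases h2 with ⟨y, h2, h2'⟩ | ⟨y, h2, h2'⟩ <;>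
    rcases h3 with ⟨z, h3, h3'⟩ | ⟨z, h3, h3'⟩ <;> rcases h4 with ⟨w, h4, h4'⟩ | ⟨w, h4, h4'⟩ <;>
    grind

theorem sblk_merge (hT : TwoBlocks b1 b2 D) (u v : V) (huv : u ≠ v) (h : BRel b1 b2 u v)
    (i : Bool) (x : R) (hu : SBlk b1 b2 D i x u) (hv : SBlk b1 b2 D i x v)
    (j : Bool) (y : R) (hu' : SBlk b1 b2 D j y u) (hv' : SBlk b1 b2 D j y v)
    (w : V) (hw : SBlk b1 b2 D i x w) : SBlk b1 b2 D j y w := by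
  have := hT.dbl u v
  have := hT.d1
  have := hT.d2
  simp only [BRel, SBlk] at *
  cases i <;> cases j <;> simp only [cond_true, cond_false] at * <;>
  rcases h with ⟨z, h1, h2⟩ | ⟨z, h1, h2⟩ <;> grind

theorem cyc5aux (hT : TwoBlocks b1 b2 D) (p q r s t : V)
    (h12 : (∃ x, b1 p = some x ∧ b1 q = some x ∧ b1 r = some x) ∨
      (∃ x, b2 p = some x ∧ b2 q = some x ∧ b2 r = some x))
    (h3 : BRel b1 b2 r s) (h4 : BRel b1 b2 s t) (h5 : BRel b1 b2 t p)
    (n3 : r ≠ s) (n4 : s ≠ t) (n5 : t ≠ p) (m1 : p ≠ r) (m3 : r ≠ t) (m4 : s ≠ p) :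
    ∃ i x, SBlk b1 b2 D i x p ∧ SBlk b1 b2 D i x q ∧ SBlk b1 b2 D i x r ∧ SBlk b1 b2 D i x s
      ∧ SBlk b1 b2 D i x t := by
  have hpr : BRel b1 b2 p r := by
    rcases h12 with ⟨x, h1, h2, h3⟩ | ⟨x, h1, h2, h3⟩
    · exact Or.inl ⟨x, h1, h3⟩
    · exact Or.inr ⟨x, h1, h3⟩
  obtain ⟨i, x, c1, c2, c3, c4⟩ := cyc4 hT p r s t hpr h3 h4 h5 m1 n3 n4 n5 m4.symm m3
  refine ⟨i, x, c1, ?_, c2, c3, c4⟩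
  rcases h12 with ⟨y, h1, h2, h3⟩ | ⟨y, h1, h2, h3⟩
  · exact sblk_merge hT p r m1 hpr false y (Or.inl h1) (Or.inl h3) i x c1 c2 q (Or.inl h2)
  · exact sblk_merge hT p r m1 hpr true y (Or.inl h1) (Or.inl h3) i x c1 c2 q (Or.inl h2)

theorem cyc5 (hT : TwoBlocks b1 b2 D) (p q r s t : V) (h1 : BRel b1 b2 p q) (h2 : BRel b1 b2 q r)
    (h3 : BRel b1 b2 r s) (h4 : BRel b1 b2 s t) (h5 : BRel b1 b2 t p)
    (n1 : p ≠ q) (n2 : q ≠ r) (n3 : r ≠ s) (n4 : s ≠ t) (n5 : t ≠ p)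
    (m1 : p ≠ r) (m2 : q ≠ s) (m3 : r ≠ t) (m4 : s ≠ p) (m5 : t ≠ q) :
    ∃ i x, SBlk b1 b2 D i x p ∧ SBlk b1 b2 D i x q ∧ SBlk b1 b2 D i x r ∧ SBlk b1 b2 D i x s
      ∧ SBlk b1 b2 D i x t := by
  have key : ∀ p q r s t : V, BRel b1 b2 r s → BRel b1 b2 s t → BRel b1 b2 t p →
      r ≠ s → s ≠ t → t ≠ p → p ≠ r → r ≠ t → s ≠ p →
      (∀ (b : V → Option R), (b = b1 ∨ b = b2) → ∀ x y, b p = some x ∧ b q = some x →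
        b q = some y ∧ b r = some y →
        ∃ i x, SBlk b1 b2 D i x p ∧ SBlk b1 b2 D i x q ∧ SBlk b1 b2 D i x r ∧ SBlk b1 b2 D i x s
          ∧ SBlk b1 b2 D i x t) := by
    intro p q r s t a1 a2 a3 a4 a5 a6 a7 a8 a9 b hb x y ⟨c1, c2⟩ ⟨c3, c4⟩
    have : x = y := by rw [c2] at c3; exact Option.some.inj c3
    subst this
    refine cyc5aux hT p q r s t ?_ a1 a2 a3 a4 a5 a6 a7 a8 a9
    rcases hb with rfl | rfl
    · exact Or.inl ⟨x, c1, c2, c4⟩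
    · exact Or.inr ⟨x, c1, c2, c4⟩
  have k1 := key p q r s t h3 h4 h5 n3 n4 n5 m1 m3 m4
  have k2 := key q r s t p h4 h5 h1 n4 n5 n1 m2 m4 m5
  have k3 := key r s t p q h5 h1 h2 n5 n1 n2 m3 m5 m1
  have k4 := key s t p q r h1 h2 h3 n1 n2 n3 m4 m1 m2
  have k5 := key t p q r s h2 h3 h4 n2 n3 n4 m5 m2 m3
  have fin : ∀ p q r s t : V,
      (∃ i x, SBlk b1 b2 D i x p ∧ SBlk b1 b2 D i x q ∧ SBlk b1 b2 D i x r ∧ SBlk b1 b2 D i x s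
        ∧ SBlk b1 b2 D i x t) →
      (∃ i x, SBlk b1 b2 D i x t ∧ SBlk b1 b2 D i x p ∧ SBlk b1 b2 D i x q ∧ SBlk b1 b2 D i x r
        ∧ SBlk b1 b2 D i x s) := by
    rintro p q r s t ⟨i, x, c1, c2, c3, c4, c5⟩
    exact ⟨i, x, c5, c1, c2, c3, c4⟩
  have k2' := fun b hb x y h h' => fin _ _ _ _ _ (k2 b hb x y h h')
  have k3' := fun b hb x y h h' => fin _ _ _ _ _ (fin _ _ _ _ _ (k3 b hb x y h h'))
  have k4' := fun b hb x y h h' => fin _ _ _ _ _ (fin _ _ _ _ _ (fin _ _ _ _ _ (k4 b hb x y h h')))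
  have k5' := fun b hb x y h h' =>
    fin _ _ _ _ _ (fin _ _ _ _ _ (fin _ _ _ _ _ (fin _ _ _ _ _ (k5 b hb x y h h'))))
  clear fin key k2 k3 k4 k5
  rcases h1 with ⟨x, h1⟩ | ⟨x, h1⟩ <;> rcases h2 with ⟨y, h2⟩ | ⟨y, h2⟩ <;>
  rcases h3 with ⟨z, h3⟩ | ⟨z, h3⟩ <;> rcases h4 with ⟨w, h4⟩ | ⟨w, h4⟩ <;>
  rcases h5 with ⟨a, h5⟩ | ⟨a, h5⟩ <;>
  first
  | exact k1 b1 (Or.inl rfl) _ _ h1 h2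
  | exact k2' b1 (Or.inl rfl) _ _ h2 h3
  | exact k3' b1 (Or.inl rfl) _ _ h3 h4
  | exact k4' b1 (Or.inl rfl) _ _ h4 h5
  | exact k5' b1 (Or.inl rfl) _ _ h5 h1
  | exact k1 b2 (Or.inr rfl) _ _ h1 h2
  | exact k2' b2 (Or.inr rfl) _ _ h2 h3
  | exact k3' b2 (Or.inr rfl) _ _ h3 h4
  | exact k4' b2 (Or.inr rfl) _ _ h4 h5
  | exact k5' b2 (Or.inr rfl) _ _ h5 h1

theorem no_theta_abs (hT : TwoBlocks b1 b2 D) (G : SimpleGraph V)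
    (hG : ∀ u v, G.Adj u v → BRel b1 b2 u v)
    (hc : ∀ i x, ∃ s : Finset V, s.card ≤ 5 ∧ ∀ v, SBlk b1 b2 D i x v → v ∈ s) :
    ¬ HasTheta6 G := by
  rintro ⟨v, hv, hcy, i, j, hij, hij1, hij2, hadj⟩
  -- it suffices to put everything in one superblock
  have fin : ∀ b x, (∀ k, SBlk b1 b2 D b x (v k)) → False := by
    intro b x hk
    obtain ⟨s, hs, hs'⟩ := hc b x
    have := Finset.card_le_card_of_injOn (s := Finset.univ) (t := s) v
      (fun k _ => hs' _ (hk k)) (hv.injOn)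
    simp at this
    omega
  have hR : ∀ k, BRel b1 b2 (v k) (v (k + 1)) := fun k => hG _ _ (hcy k)
  have hR' : ∀ k l, l = k + 1 → BRel b1 b2 (v k) (v l) := by
    rintro k l rfl
    exact hR k
  have hN : ∀ k l, k ≠ l → v k ≠ v l := fun k l h => hv.ne h
  have bsymm : ∀ u w, BRel b1 b2 u w → BRel b1 b2 w u := by
    rintro u w (⟨x, h1, h2⟩ | ⟨x, h1, h2⟩)
    · exact Or.inl ⟨x, h2, h1⟩
    · exact Or.inr ⟨x, h2, h1⟩
  have cover : ∀ i k : Fin 6, k = i ∨ k = i + 1 ∨ k = i + 2 ∨ k = i + 3 ∨ k = i + 4 ∨ k = i + 5 := by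
    decide
  have short : ∀ i : Fin 6, G.Adj (v i) (v (i + 2)) → False := by
    intro i had
    have e1 := hR' i (i + 1) rfl
    have e2 := hR' (i + 1) (i + 2) (by clear * -; revert i; decide)
    have e3 := hR' (i + 2) (i + 3) (by clear * -; revert i; decide)
    have e4 := hR' (i + 3) (i + 4) (by clear * -; revert i; decide)
    have e5 := hR' (i + 4) (i + 5) (by clear * -; revert i; decide)
    have e6 := hR' (i + 5) i (by clear * -; revert i; decide)
    obtain ⟨b, x, c1, c2, c3⟩ := cyc3 (D := D) _ _ _ e1 e2 (bsymm _ _ (hG _ _ had))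
    obtain ⟨b', x', d1, d2, d3, d4, d5⟩ := cyc5 hT _ _ _ _ _ (hG _ _ had) e3 e4 e5 e6
      (by apply hN; clear * -; revert i; decide) (by apply hN; clear * -; revert i; decide)
      (by apply hN; clear * -; revert i; decide) (by apply hN; clear * -; revert i; decide)
      (by apply hN; clear * -; revert i; decide) (by apply hN; clear * -; revert i; decide)
      (by apply hN; clear * -; revert i; decide) (by apply hN; clear * -; revert i; decide)
      (by apply hN; clear * -; revert i; decide) (by apply hN; clear * -; revert i; decide)
    apply fin b' x'
    intro k
    rcases cover i k with rfl | rfl | rfl | rfl | rfl | rfl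
    · exact d1
    · exact sblk_merge hT _ _ had.ne (hG _ _ had) b x c1 c3 b' x' d1 d2 _ c2
    · exact d2
    · exact d3
    · exact d4
    · exact d5
  have long : ∀ i : Fin 6, G.Adj (v i) (v (i + 3)) → False := by
    intro i had
    have e1 := hR' i (i + 1) rfl
    have e2 := hR' (i + 1) (i + 2) (by clear * -; revert i; decide)
    have e3 := hR' (i + 2) (i + 3) (by clear * -; revert i; decide)
    have e4 := hR' (i + 3) (i + 4) (by clear * -; revert i; decide)
    have e5 := hR' (i + 4) (i + 5) (by clear * -; revert i; decide)
    have e6 := hR' (i + 5) i (by clear * -; revert i; decide)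
    obtain ⟨b, x, c1, c2, c3, c4⟩ := cyc4 hT _ _ _ _ e1 e2 e3 (bsymm _ _ (hG _ _ had))
      (by apply hN; clear * -; revert i; decide) (by apply hN; clear * -; revert i; decide)
      (by apply hN; clear * -; revert i; decide) (by apply hN; clear * -; revert i; decide)
      (by apply hN; clear * -; revert i; decide) (by apply hN; clear * -; revert i; decide)
    obtain ⟨b', x', d1, d2, d3, d4⟩ := cyc4 hT _ _ _ _ (hG _ _ had) e4 e5 e6
      (by apply hN; clear * -; revert i; decide) (by apply hN; clear * -; revert i; decide)
      (by apply hN; clear * -; revert i; decide) (by apply hN; clear * -; revert i; decide)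
      (by apply hN; clear * -; revert i; decide) (by apply hN; clear * -; revert i; decide)
    apply fin b' x'
    intro k
    rcases cover i k with rfl | rfl | rfl | rfl | rfl | rfl
    · exact d1
    · exact sblk_merge hT _ _ had.ne (hG _ _ had) b x c1 c4 b' x' d1 d2 _ c2
    · exact sblk_merge hT _ _ had.ne (hG _ _ had) b x c1 c4 b' x' d1 d2 _ c3
    · exact d2
    · exact d3
    · exact d4
  have cases3 : ∀ i j : Fin 6, i ≠ j → j ≠ i + 1 → i ≠ j + 1 →
      j = i + 2 ∨ j = i + 3 ∨ i = j + 2 := by decide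
  rcases cases3 i j hij hij1 hij2 with rfl | rfl | rfl
  · exact short _ hadj
  · exact long _ hadj
  · exact short _ hadj.symm

end

/-! ### The concrete blocks are in general position -/

section
variable {R : Type*} [CommRing R]

/-- Class 1 block of a vertex. -/
def bk1 (v : R × Fin 7) : Option R :=
  (![some v.1, some v.1, some v.1, some v.1, some v.1, none, none] : Fin 7 → Option R) v.2

/-- Class 2 block of a vertex. -/
def bk2 (g : R) (v : R × Fin 7) : Option R :=
  (![some v.1, some (g * v.1), some (g ^ 2 * v.1 + 1), none, none, some v.1, some v.1] :
    Fin 7 → Option R) v.2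

/-- Coinciding blocks. -/
def Dbl (g : R) (x y : R) : Prop :=
  (x = g * x ∧ y = x) ∨ (g * x = g ^ 2 * x + 1 ∧ y = g * x) ∨ (x = g ^ 2 * x + 1 ∧ y = x)

/-- Special class 1 blocks. -/
def Sp1 (g : R) (x : R) : Prop := x = g * x ∨ g * x = g ^ 2 * x + 1 ∨ x = g ^ 2 * x + 1

/-- Special class 2 blocks. -/
def Sp2 (g : R) (y : R) : Prop := y = g ^ 2 * y ∨ g ^ 2 * y = g * (y - 1) ∨ y = g * (y - 1)

/-- Deleted vertices. -/
def Del (g : R) (v : R × Fin 7) : Prop :=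
  (v.2 = 4 ∧ Sp1 g v.1) ∨ ((v.2 = 5 ∨ v.2 = 6) ∧ Sp2 g v.1)

theorem bk_both (g : R) (v : R × Fin 7) (x y : R) (h1 : bk1 v = some x) (h2 : bk2 g v = some y) :
    (v = (x, 0) ∧ y = x) ∨ (v = (x, 1) ∧ y = g * x) ∨ (v = (x, 2) ∧ y = g ^ 2 * x + 1) := by
  obtain ⟨a, c⟩ := v
  fin_cases c <;> simp [bk1, bk2] at h1 h2 ⊢ <;> subst h1 <;> simp [h2]

theorem twoBlocks (g : R) (hg : g ^ 2 + g + 1 = 0) (h10 : (1 : R) ≠ 0) :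
    TwoBlocks (bk1 (R := R)) (bk2 g) (Dbl g) where
  dbl := by
    intro u v x y huv h1 h2 h3 h4
    rcases bk_both g u x y h1 h3 with ⟨rfl, r⟩ | ⟨rfl, r⟩ | ⟨rfl, r⟩ <;>
    rcases bk_both g v x y h2 h4 with ⟨rfl, r'⟩ | ⟨rfl, r'⟩ | ⟨rfl, r'⟩ <;>
    simp only [Dbl] <;> grind
  d1 := by
    intro x y y' h h'
    simp only [Dbl] at h h'
    grind
  d2 := by
    intro x x' y h h'
    have hg3 : g ^ 3 = 1 := by linear_combination (g - 1) * hg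
    simp only [Dbl] at h h'
    rcases h with ⟨h1, h2⟩ | ⟨h1, h2⟩ | ⟨h1, h2⟩ <;>
    rcases h' with ⟨h1', h2'⟩ | ⟨h1', h2'⟩ | ⟨h1', h2'⟩ <;> grind
  alt := by
    intro a b c d x y x' y' n1 n2 n3 n4 n5 n6 a1 a2 a3 a4 a5 a6 a7 a8
    have hg3 : g ^ 3 = 1 := by linear_combination (g - 1) * hg
    rcases bk_both g a x y' a1 a8 with ⟨rfl, r1⟩ | ⟨rfl, r1⟩ | ⟨rfl, r1⟩ <;>
    rcases bk_both g b x y a2 a3 with ⟨rfl, r2⟩ | ⟨rfl, r2⟩ | ⟨rfl, r2⟩ <;>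
    first
    | exact n1 rfl
    | rcases bk_both g c x' y a5 a4 with ⟨rfl, r3⟩ | ⟨rfl, r3⟩ | ⟨rfl, r3⟩ <;>
      rcases bk_both g d x' y' a6 a7 with ⟨rfl, r4⟩ | ⟨rfl, r4⟩ | ⟨rfl, r4⟩ <;>
      first
      | exact n3 rfl
      | simp at n1 n2 n3 n4 n5 n6
        clear a1 a2 a3 a4 a5 a6 a7 a8
        grind
end

section
variable {R : Type*} [CommRing R]

theorem twoBlocks_comap {V V' : Type*} {b1 b2 : V' → Option R} {D : R → R → Prop}
    (h : TwoBlocks b1 b2 D) (ι : V → V') (hι : Function.Injective ι) :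
    TwoBlocks (fun v => b1 (ι v)) (fun v => b2 (ι v)) D where
  dbl := fun u v x y n => h.dbl _ _ x y (hι.ne n)
  d1 := h.d1
  d2 := h.d2
  alt := fun a b c d x y x' y' n1 n2 n3 n4 n5 n6 =>
    h.alt _ _ _ _ x y x' y' (hι.ne n1) (hι.ne n2) (hι.ne n3) (hι.ne n4) (hι.ne n5) (hι.ne n6)

theorem bk1_some (v : R × Fin 7) (x : R) (h : bk1 v = some x) :
    v = (x, 0) ∨ v = (x, 1) ∨ v = (x, 2) ∨ v = (x, 3) ∨ v = (x, 4) := by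
  obtain ⟨a, c⟩ := v
  fin_cases c <;> simp [bk1] at h ⊢ <;> exact h

theorem bk2_some (g : R) (hg : g ^ 2 + g + 1 = 0) (v : R × Fin 7) (y : R)
    (h : bk2 g v = some y) :
    v = (y, 0) ∨ v = (g ^ 2 * y, 1) ∨ v = (g * (y - 1), 2) ∨ v = (y, 5) ∨ v = (y, 6) := by
  have hg3 : g ^ 3 = 1 := by linear_combination (g - 1) * hg
  obtain ⟨a, c⟩ := v
  fin_cases c <;> simp [bk2] at h ⊢
  · exact h
  · rw [← h]; linear_combination - a * hg3
  · rw [← h]; linear_combination - a * hg3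
  · exact h
  · exact h

theorem dbl_sp (g : R) (hg : g ^ 2 + g + 1 = 0) (x y : R) (h : Dbl g x y) :
    Sp1 g x ∧ Sp2 g y ∧ ∃ q, ∀ v : R × Fin 7, v = (y, 0) ∨ v = (g ^ 2 * y, 1) ∨ v = (g * (y - 1), 2) →
      v = (x, 0) ∨ v = (x, 1) ∨ v = (x, 2) ∨ v = q := by
  have hg3 : g ^ 3 = 1 := by linear_combination (g - 1) * hg
  rcases h with ⟨h, rfl⟩ | ⟨h, rfl⟩ | ⟨h, rfl⟩
  · refine ⟨Or.inl h, Or.inl (by grind), (g * (y - 1), 2), ?_⟩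
    have : g ^ 2 * y = y := by grind
    rw [this]
    tauto
  · refine ⟨Or.inr (Or.inl h), Or.inr (Or.inl (by grind)), (g * x, 0), ?_⟩
    have : g ^ 2 * (g * x) = x := by grind
    have h3 : g * (g * x - 1) = x := by grind
    rw [this, h3]
    tauto
  · refine ⟨Or.inr (Or.inr h), Or.inr (Or.inr (by grind)), (g ^ 2 * y, 1), ?_⟩
    have h3 : g * (y - 1) = y := by grind
    rw [h3]
    tauto

theorem sblk_small [DecidableEq R] (g : R) (hg : g ^ 2 + g + 1 = 0) (h10 : (1 : R) ≠ 0)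
    (i : Bool) (x : R) :
    ∃ s : Finset (R × Fin 7), s.card ≤ 5 ∧ ∀ v, ¬ Del g v → SBlk bk1 (bk2 g) (Dbl g) i x v → v ∈ s := by
  have hT := twoBlocks g hg h10
  have common : ∀ x y, Dbl g x y → ∃ s : Finset (R × Fin 7), s.card ≤ 5 ∧
      ∀ v, ¬ Del g v → (bk1 v = some x ∨ bk2 g v = some y) → v ∈ s := by
    intro x y hxy
    obtain ⟨h1, h2, q, hq⟩ := dbl_sp g hg x y hxy
    refine ⟨{(x, 0), (x, 1), (x, 2), (x, 3), q}, Finset.card_le_five, ?_⟩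
    intro v hv hb
    simp only [Finset.mem_insert, Finset.mem_singleton]
    rcases hb with hb | hb
    · rcases bk1_some v x hb with h | h | h | h | h
      · tauto
      · tauto
      · tauto
      · tauto
      · exact absurd (Or.inl ⟨by rw [h], by rw [h]; exact h1⟩) hv
    · rcases bk2_some g hg v y hb with h | h | h | h | h
      · have := hq v; tauto
      · have := hq v; tauto
      · have := hq v; tauto
      · exact absurd (Or.inr ⟨by rw [h]; simp, by rw [h]; exact h2⟩) hv
      · exact absurd (Or.inr ⟨by rw [h]; simp, by rw [h]; exact h2⟩) hv
  cases i
  · by_cases hx : ∃ y, Dbl g x y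
    · obtain ⟨y, hy⟩ := hx
      obtain ⟨s, hs, hs'⟩ := common x y hy
      refine ⟨s, hs, fun v hv hb => hs' v hv ?_⟩
      rcases hb with hb | ⟨y', hy', hb⟩
      · exact Or.inl hb
      · rw [hT.d1 _ _ _ hy hy']; exact Or.inr hb
    · refine ⟨{(x, 0), (x, 1), (x, 2), (x, 3), (x, 4)}, Finset.card_le_five, ?_⟩
      intro v hv hb
      rcases hb with hb | ⟨y', hy', hb⟩
      · have := bk1_some v x hb
        simpa using this
      · exact absurd ⟨y', hy'⟩ hx
  · by_cases hx : ∃ y, Dbl g y x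
    · obtain ⟨y, hy⟩ := hx
      obtain ⟨s, hs, hs'⟩ := common y x hy
      refine ⟨s, hs, fun v hv hb => hs' v hv ?_⟩
      rcases hb with hb | ⟨y', hy', hb⟩
      · exact Or.inr hb
      · rw [hT.d2 _ _ _ hy hy']; exact Or.inl hb
    · refine ⟨{(x, 0), (g ^ 2 * x, 1), (g * (x - 1), 2), (x, 5), (x, 6)}, Finset.card_le_five, ?_⟩
      intro v hv hb
      rcases hb with hb | ⟨y', hy', hb⟩
      · have := bk2_some g hg v x hb
        simpa using this
      · exact absurd ⟨y', hy'⟩ hx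
end

theorem emb_bk1 {N : ℕ} (g : ZMod N) (x : ZMod N) (l : Fin 5) :
    bk1 (emb g false x l) = some x := by
  fin_cases l <;> simp [emb, bk1]

theorem emb_bk2 {N : ℕ} (g : ZMod N) (hg : g ^ 2 + g + 1 = 0) (x : ZMod N) (l : Fin 5) :
    bk2 g (emb g true x l) = some x := by
  have hg3 : g ^ 3 = 1 := by linear_combination (g - 1) * hg
  fin_cases l <;> simp [emb, bk2]
  · linear_combination x * hg3
  · linear_combination (x - 1) * hg3

theorem brel_symm {V R : Type*} {b1 b2 : V → Option R} (u w : V) (h : BRel b1 b2 u w) :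
    BRel b1 b2 w u := by
  rcases h with ⟨x, h1, h2⟩ | ⟨x, h1, h2⟩
  · exact Or.inl ⟨x, h2, h1⟩
  · exact Or.inr ⟨x, h2, h1⟩

theorem edge_brel {N : ℕ} (g : ZMod N) (hg : g ^ 2 + g + 1 = 0) (e : Bool × ZMod N × Fin 9) :
    BRel bk1 (bk2 g) (esrc g e) (etgt g e) := by
  obtain ⟨b, x, i⟩ := e
  cases b
  · exact Or.inl ⟨x, emb_bk1 g x _, emb_bk1 g x _⟩
  · exact Or.inr ⟨x, emb_bk2 g hg x _, emb_bk2 g hg x _⟩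

theorem adj_brel {N : ℕ} (g : ZMod N) (hg : g ^ 2 + g + 1 = 0) (u v : ZMod N × Fin 7)
    (h : (Gp g).Adj u v) : BRel bk1 (bk2 g) u v := by
  rw [Gp, SimpleGraph.fromRel_adj] at h
  rcases h with ⟨_, ⟨e, rfl, rfl⟩ | ⟨e, rfl, rfl⟩⟩
  · exact edge_brel g hg e
  · exact brel_symm _ _ (edge_brel g hg e)

theorem no_theta {N : ℕ} (g : ZMod N) (hg : g ^ 2 + g + 1 = 0) (h10 : (1 : ZMod N) ≠ 0)
    {V : Type*} (ι : V → ZMod N × Fin 7) (hι : Function.Injective ι) (hd : ∀ v, ¬ Del g (ι v)) :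
    ¬ HasTheta6 ((Gp g).comap ι) := by
  apply no_theta_abs (twoBlocks_comap (twoBlocks g hg h10) ι hι)
  · intro u v h
    exact adj_brel g hg _ _ h
  · intro i x
    obtain ⟨s, hs, hs'⟩ := sblk_small g hg h10 i x
    refine ⟨s.preimage ι hι.injOn, ?_, ?_⟩
    · refine le_trans ?_ hs
      exact Finset.card_le_card_of_injOn ι (fun v hv => by simpa using hv) hι.injOn
    · intro v hv
      rw [Finset.mem_preimage]
      exact hs' _ (hd v) hv

/-! ### Counting vertices and edges -/

section
variable {R : Type*} [CommRing R]

theorem sp1_iff (g u : R) (hg : g ^ 2 + g + 1 = 0) (hu : (1 - g) * u = 1) (x : R) :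
    Sp1 g x ↔ x = 0 ∨ x = g ^ 2 * u ∨ x = -(g * u) := by
  have hg3 : g ^ 3 = 1 := by linear_combination (g - 1) * hg
  simp only [Sp1]
  constructor
  · rintro (h | h | h)
    · left; grind
    · right; left; grind
    · right; right; grind
  · rintro (h | h | h)
    · left; rw [h]; ring
    · right; left; grind
    · right; right; grind

theorem sp2_iff (g u : R) (hg : g ^ 2 + g + 1 = 0) (hu : (1 - g) * u = 1) (x : R) :
    Sp2 g x ↔ x = 0 ∨ x = u ∨ x = -(g * u) := by
  have hg3 : g ^ 3 = 1 := by linear_combination (g - 1) * hg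
  simp only [Sp2]
  constructor
  · rintro (h | h | h)
    · left; grind
    · right; left; grind
    · right; right; grind
  · rintro (h | h | h)
    · left; rw [h]; ring
    · right; left; grind
    · right; right; grind

theorem sp2_excl (g : R) (hg : g ^ 2 + g + 1 = 0) (h10 : (1 : R) ≠ 0) (y : R) :
    ¬ (y = g ^ 2 * y ∧ g ^ 2 * y = g * (y - 1)) ∧ ¬ (y = g ^ 2 * y ∧ y = g * (y - 1)) ∧
    ¬ (g ^ 2 * y = g * (y - 1) ∧ y = g * (y - 1)) := by
  have hg3 : g ^ 3 = 1 := by linear_combination (g - 1) * hg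
  refine ⟨?_, ?_, ?_⟩ <;> grind

theorem sp1_card (g : R) [Fintype R] [DecidableEq R] [DecidablePred (Sp1 (R := R) g)] (u : R)
    (hg : g ^ 2 + g + 1 = 0) (h10 : (1 : R) ≠ 0) (hu : (1 - g) * u = 1) :
    (Finset.univ.filter (Sp1 g)).card = 3 := by
  have hg3 : g ^ 3 = 1 := by linear_combination (g - 1) * hg
  rw [Finset.card_eq_three]
  refine ⟨0, g ^ 2 * u, -(g * u), ?_, ?_, ?_, ?_⟩
  · grind
  · grind
  · grind
  · ext x; simp [sp1_iff g u hg hu]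

theorem sp2_card (g : R) [Fintype R] [DecidableEq R] [DecidablePred (Sp2 (R := R) g)] (u : R)
    (hg : g ^ 2 + g + 1 = 0) (h10 : (1 : R) ≠ 0) (hu : (1 - g) * u = 1) :
    (Finset.univ.filter (Sp2 g)).card = 3 := by
  have hg3 : g ^ 3 = 1 := by linear_combination (g - 1) * hg
  rw [Finset.card_eq_three]
  refine ⟨0, u, -(g * u), ?_, ?_, ?_, ?_⟩
  · grind
  · grind
  · grind
  · ext x; simp [sp2_iff g u hg hu]
end

section
open Classical

theorem vert_card {N : ℕ} [NeZero N] (g u : ZMod N) (hg : g ^ 2 + g + 1 = 0)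
    (h10 : (1 : ZMod N) ≠ 0) (hu : (1 - g) * u = 1) :
    (Finset.univ.filter (fun v : ZMod N × Fin 7 => ¬ Del g v)).card + 9 = 7 * N := by
  have h1 := sp1_card g u hg h10 hu
  have h2 := sp2_card g u hg h10 hu
  rw [Finset.card_filter] at h1 h2 ⊢
  rw [Fintype.sum_prod_type]
  have key : ∑ x : ZMod N, (∑ c : Fin 7, (if ¬ Del g (x, c) then 1 else 0)
      + (if Sp1 g x then 1 else 0) + 2 * (if Sp2 g x then 1 else 0)) = ∑ x : ZMod N, 7 := by
    apply Finset.sum_congr rfl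
    intro x _
    by_cases a : Sp1 g x <;> by_cases b : Sp2 g x <;> simp [Del, a, b]
    all_goals rfl
  rw [Finset.sum_add_distrib, Finset.sum_add_distrib, ← Finset.mul_sum, h1, h2] at key
  simp at key ⊢
  omega

/-- The edges which are kept, each listed once. -/
def Valid {N : ℕ} (g : ZMod N) (e : Bool × ZMod N × Fin 9) : Prop :=
  bif e.1 then ¬ (Sp2 g e.2.1 ∧ 3 ≤ e.2.2) ∧ ¬ (e.2.1 = g ^ 2 * e.2.1 ∧ e.2.2 = 0) ∧
    ¬ (g ^ 2 * e.2.1 = g * (e.2.1 - 1) ∧ e.2.2 = 1) ∧ ¬ (e.2.1 = g * (e.2.1 - 1) ∧ e.2.2 = 2)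
  else ¬ (Sp1 g e.2.1 ∧ 6 ≤ e.2.2)

theorem valid_card {N : ℕ} [NeZero N] (g u : ZMod N) (hg : g ^ 2 + g + 1 = 0)
    (h10 : (1 : ZMod N) ≠ 0) (hu : (1 - g) * u = 1) :
    (Finset.univ.filter (fun e => Valid g e)).card + 30 = 18 * N := by
  have h1 := sp1_card g u hg h10 hu
  have h2 := sp2_card g u hg h10 hu
  rw [Finset.card_filter] at h1 h2 ⊢
  rw [Fintype.sum_prod_type]
  simp only [Fintype.sum_prod_type, Fintype.sum_bool]
  have k1 : ∑ x : ZMod N, (∑ i : Fin 9, (if Valid g (false, x, i) then 1 else 0)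
      + 3 * (if Sp1 g x then 1 else 0)) = ∑ x : ZMod N, 9 := by
    apply Finset.sum_congr rfl
    intro x _
    by_cases a : Sp1 g x <;> simp [Valid, a]
    all_goals decide
  have k2 : ∑ x : ZMod N, (∑ i : Fin 9, (if Valid g (true, x, i) then 1 else 0)
      + 7 * (if Sp2 g x then 1 else 0)) = ∑ x : ZMod N, 9 := by
    apply Finset.sum_congr rfl
    intro x _
    obtain ⟨x1, x2, x3⟩ := sp2_excl g hg h10 x
    by_cases a : x = g ^ 2 * x <;> by_cases b : g ^ 2 * x = g * (x - 1) <;>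
      by_cases c : x = g * (x - 1)
    · exact absurd ⟨a, b⟩ x1
    · exact absurd ⟨a, b⟩ x1
    · exact absurd ⟨a, c⟩ x2
    · have : Sp2 g x := Or.inl a
      simp [Valid, this, ← a, c]
      rfl
    · exact absurd ⟨b, c⟩ x3
    · have : Sp2 g x := Or.inr (Or.inl b)
      simp [Valid, this, b, c]
      rfl
    · have : Sp2 g x := Or.inr (Or.inr c)
      simp [Valid, this, a, Ne.symm a, ← c]
      rfl
    · have : ¬ Sp2 g x := by simp [Sp2, a, b, c]
      simp [Valid, this, a, b, c]
  rw [Finset.sum_add_distrib, ← Finset.mul_sum, h1] at k1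
  rw [Finset.sum_add_distrib, ← Finset.mul_sum, h2] at k2
  simp at k1 k2 ⊢
  omega
end

theorem emb_inj {N : ℕ} (g : ZMod N) (b : Bool) (x : ZMod N) : Function.Injective (emb g b x) := by
  intro l m h
  have h2 := congrArg Prod.snd h
  clear h
  cases b <;> fin_cases l <;> fin_cases m <;> simp [emb] at h2 ⊢

theorem local_inj : ∀ i j : Fin 9, s(les i, ledEnd i) = s(les j, ledEnd j) → i = j := by
  decide

theorem local_ne : ∀ i : Fin 9, les i ≠ ledEnd i := by decide

theorem valid_del {N : ℕ} (g : ZMod N) (e : Bool × ZMod N × Fin 9) (h : Valid g e) :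
    ¬ Del g (esrc g e) ∧ ¬ Del g (etgt g e) := by
  obtain ⟨b, x, i⟩ := e
  cases b <;> fin_cases i <;> simp [Valid, Del, esrc, etgt, emb, les, ledEnd] at h ⊢ <;> exact h

theorem cross_ne {N : ℕ} (g : ZMod N) (hg : g ^ 2 + g + 1 = 0) (x y : ZMod N) (i j : Fin 9)
    (h2 : Valid g (true, y, j))
    (h : s(esrc g (false, x, i), etgt g (false, x, i)) =
      s(esrc g (true, y, j), etgt g (true, y, j))) : False := by
  have hs : bk1 (esrc g (true, y, j)) = some x ∧ bk1 (etgt g (true, y, j)) = some x := by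
    have a := emb_bk1 g x (les i)
    have b := emb_bk1 g x (ledEnd i)
    rw [Sym2.eq_iff] at h
    rcases h with ⟨p, q⟩ | ⟨p, q⟩
    · rw [← p, ← q]; exact ⟨a, b⟩
    · rw [← p, ← q]; exact ⟨b, a⟩
  clear h
  obtain ⟨p, q⟩ := hs
  fin_cases j <;> simp [Valid, esrc, etgt, emb, les, ledEnd, bk1] at h2 p q
  · exact h2 (by rw [q]; exact p)
  · exact h2 (by rw [q]; exact p)
  · exact h2 (by rw [p]; exact q)

theorem valid_inj {N : ℕ} (g : ZMod N) (hg : g ^ 2 + g + 1 = 0) :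
    Set.InjOn (fun e => s(esrc g e, etgt g e)) {e | Valid g e} := by
  rintro ⟨b, x, i⟩ h1 ⟨c, y, j⟩ h2 h
  have h : s(esrc g (b, x, i), etgt g (b, x, i)) = s(esrc g (c, y, j), etgt g (c, y, j)) := h
  have same : ∀ b x y i j, s(esrc g (b, x, i), etgt g (b, x, i)) = s(esrc g (b, y, j), etgt g (b, y, j))
      → x = y → i = j := by
    rintro b x _ i j h rfl
    apply local_inj
    apply Sym2.map.injective (emb_inj g b x)
    exact h
  cases b <;> cases c
  · have : x = y := by
      have a := emb_bk1 g x (les i)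
      have b := emb_bk1 g y (les j)
      have c := emb_bk1 g y (ledEnd j)
      rw [Sym2.eq_iff] at h
      have a' : bk1 (esrc g (false, x, i)) = some x := a
      rcases h with ⟨p, q⟩ | ⟨p, q⟩
      · rw [p] at a'
        exact Option.some.inj (a'.symm.trans b)
      · rw [p] at a'
        exact Option.some.inj (a'.symm.trans c)
    rw [this, same _ _ _ _ _ h this]
  · exact (cross_ne g hg x y i j h2 h).elim
  · exact (cross_ne g hg y x j i h1 h.symm).elim
  · have : x = y := by
      have a := emb_bk2 g hg x (les i)
      have b := emb_bk2 g hg y (les j)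
      have c := emb_bk2 g hg y (ledEnd j)
      rw [Sym2.eq_iff] at h
      have a' : bk2 g (esrc g (true, x, i)) = some x := a
      rcases h with ⟨p, q⟩ | ⟨p, q⟩
      · rw [p] at a'
        exact Option.some.inj (a'.symm.trans b)
      · rw [p] at a'
        exact Option.some.inj (a'.symm.trans c)
    rw [this, same _ _ _ _ _ h this]

theorem valid_surj {N : ℕ} (g : ZMod N) (e : Bool × ZMod N × Fin 9)
    (h1 : ¬ Del g (esrc g e)) (h2 : ¬ Del g (etgt g e)) :
    ∃ e', Valid g e' ∧ s(esrc g e', etgt g e') = s(esrc g e, etgt g e) := by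
  by_cases hv : Valid g e
  · exact ⟨e, hv, rfl⟩
  obtain ⟨b, x, i⟩ := e
  cases b
  · exfalso
    apply hv
    clear hv
    fin_cases i <;> simp [Valid, Del, esrc, etgt, emb, les, ledEnd] at h1 h2 ⊢ <;> assumption
  · by_cases c0 : x = g ^ 2 * x ∧ i = 0
    · obtain ⟨c, rfl⟩ := c0
      refine ⟨(false, x, 0), by simp [Valid], ?_⟩
      simp [esrc, etgt, emb, les, ledEnd, ← c]
    by_cases c1 : g ^ 2 * x = g * (x - 1) ∧ i = 1
    · obtain ⟨c, rfl⟩ := c1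
      refine ⟨(false, g ^ 2 * x, 1), by simp [Valid], ?_⟩
      simp [esrc, etgt, emb, les, ledEnd, ← c]
    by_cases c2 : x = g * (x - 1) ∧ i = 2
    · obtain ⟨c, rfl⟩ := c2
      refine ⟨(false, x, 2), by simp [Valid], ?_⟩
      simp [esrc, etgt, emb, les, ledEnd, ← c]
    exfalso
    apply hv
    refine ⟨?_, c0, c1, c2⟩
    clear hv c0 c1 c2
    fin_cases i <;> simp [Del, esrc, etgt, emb, les, ledEnd] at h1 h2 ⊢ <;> assumption

theorem edge_card {N : ℕ} [NeZero N] (g u : ZMod N) (hg : g ^ 2 + g + 1 = 0)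
    (h10 : (1 : ZMod N) ≠ 0) (hu : (1 - g) * u = 1)
    {V : Type*} (ι : V → ZMod N × Fin 7) (hι : Function.Injective ι)
    (hd : ∀ v, ¬ Del g v ↔ ∃ w, ι w = v) :
    ((Gp g).comap ι).edgeSet.ncard + 30 = 18 * N := by
  classical
  rw [← valid_card g u hg h10 hu]
  congr 1
  rw [← Set.ncard_image_of_injective _ (Sym2.map.injective hι), ← Set.ncard_coe_finset,
    ← Set.ncard_image_of_injOn (f := fun e => s(esrc g e, etgt g e))
      (by simpa using valid_inj g hg)]
  congr 1
  ext s
  constructor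
  · rintro ⟨s, hs, rfl⟩
    induction s with | _ a b
    rw [SimpleGraph.mem_edgeSet, SimpleGraph.comap_adj, Gp, SimpleGraph.fromRel_adj] at hs
    have ha : ¬ Del g (ι a) := (hd _).2 ⟨a, rfl⟩
    have hb : ¬ Del g (ι b) := (hd _).2 ⟨b, rfl⟩
    rcases hs with ⟨_, ⟨e, h1, h2⟩ | ⟨e, h1, h2⟩⟩
    · obtain ⟨e', h3, h4⟩ := valid_surj g e (by rwa [h1]) (by rwa [h2])
      refine ⟨e', by simpa using h3, ?_⟩
      simp only [h4, h1, h2, Sym2.map_mk, Prod.map]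
    · obtain ⟨e', h3, h4⟩ := valid_surj g e (by rwa [h1]) (by rwa [h2])
      refine ⟨e', by simpa using h3, ?_⟩
      simp only [h4, h1, h2, Sym2.map_mk, Prod.map]
      exact Sym2.eq_swap
  · rintro ⟨e, he, rfl⟩
    have he : Valid g e := by simpa using he
    obtain ⟨h1, h2⟩ := valid_del g e he
    obtain ⟨a, ha⟩ := (hd _).1 h1
    obtain ⟨b, hb⟩ := (hd _).1 h2
    refine ⟨s(a, b), ?_, ?_⟩
    · rw [SimpleGraph.mem_edgeSet, SimpleGraph.comap_adj, Gp, SimpleGraph.fromRel_adj]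
      refine ⟨?_, Or.inl ⟨e, ha.symm, hb.symm⟩⟩
      rw [ha, hb]
      exact (emb_inj g _ _).ne (local_ne _)
    · simp [ha, hb]

theorem exists_graph (t : ℕ) (ht : 0 < t) :
    ∃ G : SimpleGraph (Fin (7 * (9 * t ^ 2 + 3 * t + 1) - 9)),
      IsPlanar G ∧ ¬ HasTheta6 G ∧ G.edgeSet.ncard + 30 = 18 * (9 * t ^ 2 + 3 * t + 1) := by
  classical
  generalize hN : 9 * t ^ 2 + 3 * t + 1 = N
  have hN1 : 1 < N := by rw [← hN]; nlinarith
  haveI : NeZero N := ⟨by omega⟩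
  haveI : Fact (1 < N) := ⟨hN1⟩
  have hz : (9 * (t : ZMod N) ^ 2 + 3 * t + 1) = 0 := by
    have : ((9 * t ^ 2 + 3 * t + 1 : ℕ) : ZMod N) = 0 := by rw [hN]; simp
    exact_mod_cast this
  have hg : (3 * (t : ZMod N)) ^ 2 + 3 * t + 1 = 0 := by linear_combination hz
  have h10 : (1 : ZMod N) ≠ 0 := one_ne_zero
  have hodd : Odd N := by
    rw [← hN]
    rcases Nat.even_or_odd t with ⟨k, rfl⟩ | ⟨k, rfl⟩
    · exact ⟨18 * k ^ 2 + 3 * k, by ring⟩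
    · exact ⟨18 * k ^ 2 + 21 * k + 6, by ring⟩
  have hu : (1 - 3 * (t : ZMod N)) * (-(t * (1 + 3 * t) * (2 + 3 * t))) = 1 := by
    linear_combination (3 * (t : ZMod N) ^ 2 + t - 1) * hz
  have hc := vert_card (3 * (t : ZMod N)) _ hg h10 hu
  have hcard : Fintype.card {v : ZMod N × Fin 7 // ¬ Del (3 * (t : ZMod N)) v} = 7 * N - 9 := by
    rw [Fintype.card_subtype]
    omega
  let e := (Fintype.equivFinOfCardEq hcard).symm
  have hι : Function.Injective (fun v => (e v).1) :=
    Subtype.val_injective.comp e.injective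
  refine ⟨(Gp (3 * (t : ZMod N))).comap (fun v => (e v).1), ?_, ?_, ?_⟩
  · exact planar_comap _ hι _ (planar_Gp hodd _ hg)
  · exact no_theta _ hg h10 _ hι (fun v => (e v).2)
  · apply edge_card _ _ hg h10 hu _ hι
    intro v
    constructor
    · intro hv
      exact ⟨e.symm ⟨v, hv⟩, by simp⟩
    · rintro ⟨w, rfl⟩
      exact (e w).2

/-- There exist infinitely many `n` admitting an `n`-vertex planar graph with no
Theta graph on 6 vertices and exactly `18n/7 - 48/7` edges. -/
theorem theta6_extremal_construction :
    ∀ N : ℕ, ∃ n : ℕ, N ≤ n ∧ ∃ G : SimpleGraph (Fin n),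
      IsPlanar G ∧ ¬ HasTheta6 G ∧
        (G.edgeSet.ncard : ℚ) = 18 / 7 * n - 48 / 7 := by
  intro N
  obtain ⟨G, h1, h2, h3⟩ := exists_graph (N + 1) (by omega)
  refine ⟨_, ?_, G, h1, h2, ?_⟩
  · have : 9 * (N + 1) ^ 2 + 3 * (N + 1) + 1 ≥ N + 9 := by nlinarith
    omega
  · generalize hM : 9 * (N + 1) ^ 2 + 3 * (N + 1) + 1 = M at *
    have hM2 : 9 ≤ 7 * M := by rw [← hM]; nlinarith
    rw [Nat.cast_sub hM2]
    have : (G.edgeSet.ncard : ℚ) + 30 = 18 * M := by exact_mod_cast h3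
    push_cast
    linarith
end

section
/- If G is an n-vertex plane triangulation on 6 vertices all of whose faces are triangles except possibly one 4-face (i.e., a 6-vertex planar graph with 11 edges), then G contains a Theta graph on 6 vertices as a subgraph. Equivalently, every Θ₆-free planar graph on 6 vertices has at most 10 edges. -/
open SimpleGraph

/-- Code of the unordered pair `{a, b}`. -/
def pairCode (a b : Fin 6) : ℕ :=
  bif Nat.ble a.val b.val then 6 * a.val + b.val else 6 * b.val + a.val

/-- Codes of the 15 pairs. -/
def allCodes : List ℕ := [1, 2, 3, 4, 5, 8, 9, 10, 11, 15, 16, 17, 22, 23, 29]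

/-- The pair `{a, b}` is not among the missing pairs `S`. -/
def clearPair (S : List ℕ) (a b : Fin 6) : Bool :=
  S.all fun n => !(Nat.beq n (pairCode a b))

/-- `c` is a 6-cycle with a chord in the graph whose missing pairs are `S`. -/
def cycleOk (S : List ℕ) (c : Fin 6 → Fin 6) : Bool :=
  (clearPair S (c 0) (c 1) && clearPair S (c 1) (c 2) && clearPair S (c 2) (c 3) &&
    clearPair S (c 3) (c 4) && clearPair S (c 4) (c 5) && clearPair S (c 5) (c 0)) &&
  (clearPair S (c 0) (c 2) || clearPair S (c 0) (c 3) || clearPair S (c 0) (c 4) ||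
    clearPair S (c 1) (c 3) || clearPair S (c 1) (c 4))

/-- Enough Hamiltonian cycles of `K₆`. -/
def someCycles : List (Fin 6 → Fin 6) :=
  [![0,1,2,3,4,5],
   ![0,2,4,1,5,3],
   ![0,1,3,5,2,4],
   ![0,2,3,1,5,4],
   ![0,3,4,1,2,5],
   ![0,1,4,5,2,3],
   ![0,2,1,5,3,4],
   ![0,3,1,2,4,5],
   ![0,2,4,3,1,5],
   ![0,4,1,2,3,5],
   ![0,1,3,4,5,2],
   ![0,1,5,2,3,4],
   ![0,1,2,4,5,3],
   ![0,1,4,2,3,5],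
   ![0,2,5,3,1,4],
   ![0,3,1,5,2,4],
   ![0,2,1,5,4,3],
   ![0,2,3,1,4,5],
   ![0,1,2,4,3,5],
   ![0,2,3,4,1,5],
   ![0,3,1,2,5,4],
   ![0,1,5,4,2,3],
   ![0,4,1,3,2,5],
   ![0,1,3,5,4,2],
   ![0,1,4,3,5,2],
   ![0,2,1,4,5,3],
   ![0,3,2,4,1,5],
   ![0,4,3,1,2,5],
   ![0,1,5,2,4,3],
   ![0,3,5,1,2,4],
   ![0,1,2,3,5,4]]

/-- Deleting `v` leaves a complete graph: all missing pairs contain `v`. -/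
def cliqueOk (S : List ℕ) (v : Fin 6) : Bool :=
  S.all fun n => Nat.beq (n / 6) v.val || Nat.beq (n % 6) v.val

def goodMissing (S : List ℕ) : Bool :=
  someCycles.any (cycleOk S) || [0, 1, 2, 3, 4, 5].any (cliqueOk S)

/-- Check `goodMissing` for all extensions of `acc` by at most `m` members of the list. -/
def searchMissing : List ℕ → ℕ → List ℕ → Bool
  | [], _, acc => goodMissing acc
  | _ :: l, 0, acc => searchMissing l 0 acc
  | x :: l, m + 1, acc => searchMissing l (m + 1) acc && searchMissing l m (x :: acc)

theorem searchMissing_sound (p : ℕ → Bool) : ∀ (l : List ℕ) (m : ℕ) (acc : List ℕ),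
    searchMissing l m acc = true → (l.filter p).length ≤ m →
    goodMissing ((l.filter p).reverse ++ acc) = true
  | [], m, acc, h, _ => by simpa [searchMissing] using h
  | x :: l, 0, acc, h, hl => by
      cases hp : p x
      · simp only [List.filter_cons, hp] at hl ⊢
        exact searchMissing_sound p l 0 acc h hl
      · simp [List.filter_cons, hp] at hl
  | x :: l, m + 1, acc, h, hl => by
      simp only [searchMissing, Bool.and_eq_true] at h
      cases hp : p x
      · simp only [List.filter_cons, hp] at hl ⊢
        exact searchMissing_sound p l (m + 1) acc h.1 hl
      · simp only [List.filter_cons, hp, if_true, List.length_cons] at hl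
        have := searchMissing_sound p l m (x :: acc) h.2 (by omega)
        simpa [List.filter_cons, hp] using this

theorem searchMissing_all : searchMissing allCodes 4 [] = true := by
  decide +kernel

theorem someCycles_inj : ∀ c ∈ someCycles, Function.Injective c := by
  have : someCycles.all (fun c => decide (∀ i j, c i = c j → i = j)) = true := by
    decide +kernel
  intro c hc i j
  have := List.all_eq_true.1 this c hc
  exact of_decide_eq_true this i j

theorem pairCode_mem : ∀ a b : Fin 6, a ≠ b → pairCode a b ∈ allCodes := by
  decide +kernel

/-- Decoding a pair. -/
def decode (n : ℕ) : Fin 6 × Fin 6 := (Fin.ofNat 6 (n / 6), Fin.ofNat 6 (n % 6))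

theorem decode_pairCode : ∀ a b : Fin 6,
    decode (pairCode a b) = (a, b) ∨ decode (pairCode a b) = (b, a) := by
  decide +kernel

theorem pairCode_contains : ∀ a b v : Fin 6, a ≠ v → b ≠ v →
    (Nat.beq (pairCode a b / 6) v.val || Nat.beq (pairCode a b % 6) v.val) = false := by
  decide +kernel

theorem theta_of_eleven (G : SimpleGraph (Fin 6)) (hP : IsPlanar G)
    (hc : 11 ≤ G.edgeSet.ncard) : HasTheta6 G := by
  classical
  let p : ℕ → Bool := fun n => decide (G.Adj (decode n).1 (decode n).2)
  have hp : ∀ a b, p (pairCode a b) = true ↔ G.Adj a b := by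
    intro a b
    rcases decode_pairCode a b with h | h <;> simp [p, h, G.adj_comm]
  -- at most four missing pairs
  have hsub : G.edgeSet ⊆
      (((allCodes.filter p).map fun n => s((decode n).1, (decode n).2)).toFinset :
        Set (Sym2 (Fin 6))) := by
    intro e
    induction e using Sym2.ind with
    | _ a b =>
      intro he
      have hab : G.Adj a b := he
      simp only [List.coe_toFinset, List.mem_map, List.mem_filter, Set.mem_setOf_eq]
      refine ⟨pairCode a b, ⟨pairCode_mem a b hab.ne, (hp a b).2 hab⟩, ?_⟩
      rcases decode_pairCode a b with h | h <;> simp [h, Sym2.eq_swap]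
  have h1 : 11 ≤ (allCodes.filter p).length := by
    have h2 := Set.ncard_le_ncard hsub (Finset.finite_toSet _)
    rw [Set.ncard_coe_finset] at h2
    have h3 := List.toFinset_card_le
      ((allCodes.filter p).map fun n => s((decode n).1, (decode n).2))
    rw [List.length_map] at h3
    omega
  have h2 : (allCodes.filter fun n => !p n).length ≤ 4 := by
    have h3 := List.length_eq_length_filter_add (l := allCodes) p
    have h4 : allCodes.length = 15 := rfl
    omega
  have hgood := searchMissing_sound _ allCodes 4 [] searchMissing_all h2
  rw [List.append_nil] at hgood
  generalize hS : (allCodes.filter fun n => !p n).reverse = S at hgood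
  have hmem : ∀ a b, a ≠ b → pairCode a b ∉ S → G.Adj a b := by
    intro a b hab h
    rw [← hS] at h
    simp only [List.mem_reverse, List.mem_filter, not_and] at h
    have := h (pairCode_mem a b hab)
    rw [← hp]
    simpa using this
  have hclear : ∀ a b, a ≠ b → clearPair S a b = true → G.Adj a b := by
    intro a b hab h
    refine hmem a b hab fun hm => ?_
    have := List.all_eq_true.1 h _ hm
    simp at this
  simp only [goodMissing, Bool.or_eq_true, List.any_eq_true] at hgood
  rcases hgood with ⟨c, hcm, hok⟩ | ⟨v, -, hv⟩
  · have hinj := someCycles_inj c hcm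
    have hadj : ∀ i j, i ≠ j → clearPair S (c i) (c j) = true → G.Adj (c i) (c j) :=
      fun i j hij => hclear _ _ (hinj.ne hij)
    simp only [cycleOk, Bool.and_eq_true, Bool.or_eq_true] at hok
    obtain ⟨⟨⟨⟨⟨⟨a0, a1⟩, a2⟩, a3⟩, a4⟩, a5⟩, hch⟩ := hok
    refine ⟨c, hinj, ?_, ?_⟩
    · intro i
      fin_cases i
      · exact hadj 0 1 (by decide) a0
      · exact hadj 1 2 (by decide) a1
      · exact hadj 2 3 (by decide) a2
      · exact hadj 3 4 (by decide) a3
      · exact hadj 4 5 (by decide) a4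
      · exact hadj 5 0 (by decide) a5
    · rcases hch with (((h | h) | h) | h) | h
      · exact ⟨0, 2, by decide, by decide, by decide, hadj _ _ (by decide) h⟩
      · exact ⟨0, 3, by decide, by decide, by decide, hadj _ _ (by decide) h⟩
      · exact ⟨0, 4, by decide, by decide, by decide, hadj _ _ (by decide) h⟩
      · exact ⟨1, 3, by decide, by decide, by decide, hadj _ _ (by decide) h⟩
      · exact ⟨1, 4, by decide, by decide, by decide, hadj _ _ (by decide) h⟩
  · exfalso
    have hK : ∀ a b, a ≠ b → a ≠ v → b ≠ v → G.Adj a b := by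
      intro a b hab ha hb
      refine hmem a b hab fun hm => ?_
      have h1 := List.all_eq_true.1 hv _ hm
      have h2 := pairCode_contains a b v ha hb
      exact absurd (h1.symm.trans h2) (by decide)
    refine hP.1 ⟨finSuccEquiv' v, ?_, ?_, ?_⟩
    · intro w
      exact ⟨v.succAbove w, finSuccEquiv'_succAbove v w⟩
    · rintro w ⟨x, hx⟩ ⟨y, hy⟩
      have hxy : x = y := (finSuccEquiv' v).injective (Eq.trans hx (Eq.symm hy))
      subst hxy
      exact SimpleGraph.Reachable.refl _
    · intro w₁ w₂ hw
      refine ⟨v.succAbove w₁, v.succAbove w₂, finSuccEquiv'_succAbove v w₁,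
        finSuccEquiv'_succAbove v w₂, hK _ _ ?_ (Fin.succAbove_ne v w₁) (Fin.succAbove_ne v w₂)⟩
      exact Fin.succAbove_right_injective.ne hw.ne

/-- A planar graph on 6 vertices with 11 edges contains a Theta graph on 6
vertices; equivalently, every Θ₆-free planar graph on 6 vertices has at most
10 edges. -/
theorem six_vertex_eleven_edges_hasTheta6 :
    (∀ G : SimpleGraph (Fin 6), IsPlanar G → G.edgeSet.ncard = 11 →
      HasTheta6 G) ∧
    (∀ G : SimpleGraph (Fin 6), IsPlanar G → ¬ HasTheta6 G →
      G.edgeSet.ncard ≤ 10) := by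
  refine ⟨fun G hP h => theta_of_eleven G hP h.ge, fun G hP hT => ?_⟩
  by_contra hlt
  exact hT (theta_of_eleven G hP (by omega))
end
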